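/- Let N be an odd Niemeier lattice of minimum norm 2 whose two even neighbors have root sublattices isometric to D₁₆⊕E₈ and A₁₅⊕D₉ respectively. Then N does not contain a sublattice isometric to L⁺. -/

import Mathlib

open scoped BigOperators

namespace Niemeier

variable {V : Type*} [AddCommGroup V] [Module ℚ V]
variable {W : Type*} [AddCommGroup W] [Module ℚ W]

/-- The dual lattice of a `ℤ`-submodule `L` of a rational vector space `V` with respect to the
bilinear form `B`: all vectors pairing integrally with every element of `L`. -/
def dualLattice (B : V →ₗ[ℚ] V →ₗ[ℚ] ℚ) (L : Submodule ℤ V) : Submodule ℤ V where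
  carrier := {x | ∀ y ∈ L, ∃ n : ℤ, B x y = n}
  zero_mem' := by
    intro y hy
    exact ⟨0, by simp⟩
  add_mem' := by
    intro a b ha hb y hy
    obtain ⟨m, hm⟩ := ha y hy
    obtain ⟨k, hk⟩ := hb y hy
    exact ⟨m + k, by push_cast [map_add, LinearMap.add_apply, hm, hk]; rfl⟩
  smul_mem' := by
    intro c x hx y hy
    obtain ⟨m, hm⟩ := hx y hy
    refine ⟨c * m, ?_⟩
    have h1 : B (c • x) y = c • (B x y) := by
      rw [map_zsmul]; rfl
    rw [h1, hm, zsmul_eq_mul]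
    push_cast
    ring

/-- `B` is a symmetric positive-definite bilinear form. -/
def IsPosDefSymm (B : V →ₗ[ℚ] V →ₗ[ℚ] ℚ) : Prop :=
  (∀ x y, B x y = B y x) ∧ ∀ x : V, x ≠ 0 → 0 < B x x

/-- `L` is a (full-rank, integral) lattice in `V` with respect to `B`. -/
structure IsIntegralLattice (B : V →ₗ[ℚ] V →ₗ[ℚ] ℚ) (L : Submodule ℤ V) : Prop where
  fg : L.FG
  spans : Submodule.span ℚ (L : Set V) = ⊤
  integral : L ≤ dualLattice B L

/-- `L` is unimodular: it coincides with its dual lattice. -/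
def IsUnimodular (B : V →ₗ[ℚ] V →ₗ[ℚ] ℚ) (L : Submodule ℤ V) : Prop :=
  L = dualLattice B L

/-- `L` is an even lattice: all norms are even integers. -/
def IsEvenLat (B : V →ₗ[ℚ] V →ₗ[ℚ] ℚ) (L : Submodule ℤ V) : Prop :=
  ∀ v ∈ L, ∃ n : ℤ, B v v = 2 * n

/-- `L` is an odd lattice: some vector has odd (integer) norm. -/
def IsOddLat (B : V →ₗ[ℚ] V →ₗ[ℚ] ℚ) (L : Submodule ℤ V) : Prop :=
  ∃ v ∈ L, ∃ n : ℤ, B v v = 2 * n + 1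

/-- An odd Niemeier lattice: an odd positive-definite unimodular integral lattice of rank 24
(positive-definiteness of `B` is a separate hypothesis). -/
def IsOddNiemeier (B : V →ₗ[ℚ] V →ₗ[ℚ] ℚ) (N : Submodule ℤ V) : Prop :=
  IsIntegralLattice B N ∧ IsUnimodular B N ∧ IsOddLat B N ∧ Module.finrank ℚ V = 24

/-- `D` is a subgroup of index two in `L`. -/
def IndexTwo (D L : Submodule ℤ V) : Prop :=
  D ≤ L ∧ ∃ a ∈ L, a ∉ D ∧ ∀ x ∈ L, x ∈ D ∨ x - a ∈ D

/-- Two lattices are neighbors if their intersection has index two in each of them. -/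
def Neighbors (L M : Submodule ℤ V) : Prop :=
  IndexTwo (L ⊓ M) L ∧ IndexTwo (L ⊓ M) M

/-- `E` is an even neighbor of the odd Niemeier lattice `N`: an even unimodular integral
lattice (in the same ambient space) which is a neighbor of `N`. -/
def IsEvenNeighbor (B : V →ₗ[ℚ] V →ₗ[ℚ] ℚ) (N E : Submodule ℤ V) : Prop :=
  IsIntegralLattice B E ∧ IsUnimodular B E ∧ IsEvenLat B E ∧ Neighbors N E

/-- The minimum norm of `L` equals `m`. -/
def HasMinNorm (B : V →ₗ[ℚ] V →ₗ[ℚ] ℚ) (L : Submodule ℤ V) (m : ℚ) : Prop :=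
  (∃ v ∈ L, v ≠ 0 ∧ B v v = m) ∧ ∀ v ∈ L, v ≠ 0 → m ≤ B v v

/-- `N` contains a sublattice isometric to the rank-6 lattice `L⁺`, i.e. there are vectors
`h, a 0, …, a 4` in `N` realizing the Gram matrix of `L⁺`. -/
def ContainsLPlus (B : V →ₗ[ℚ] V →ₗ[ℚ] ℚ) (N : Submodule ℤ V) : Prop :=
  ∃ h ∈ N, ∃ a : Fin 5 → V, (∀ i, a i ∈ N) ∧
    B h h = 2 ∧ (∀ i, B h (a i) = 1) ∧ (∀ i, B (a i) (a i) = 3) ∧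
    ∀ i j, i ≠ j → B (a i) (a j) = 0

/-- Two lattices (in possibly different ambient spaces, with forms `B` and `C`) are isometric:
there is a `ℤ`-linear bijection between them preserving the bilinear forms. -/
def LatticeIsometric (B : V → V → ℚ) (C : W → W → ℚ)
    (L : Submodule ℤ V) (M : Submodule ℤ W) : Prop :=
  ∃ f : L ≃ₗ[ℤ] M, ∀ x y : L, C (f x) (f y) = B x y

/-- The standard dot product on `ℚⁿ`. -/
def stdDot (n : ℕ) : (Fin n → ℚ) → (Fin n → ℚ) → ℚ := fun x y => ∑ i, x i * y i

/-- The orthogonal sum of two bilinear forms. -/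
def prodForm (B : V → V → ℚ) (C : W → W → ℚ) : V × W → V × W → ℚ :=
  fun p q => B p.1 q.1 + C p.2 q.2

/-- A vector in `ℚⁿ` has integer coordinates. -/
def IsIntVec {n : ℕ} (x : Fin n → ℚ) : Prop := ∀ i, ∃ m : ℤ, x i = m

/-- The root lattice `Dₙ = {x ∈ ℤⁿ : ∑ xᵢ even}`. -/
def latD (n : ℕ) : Submodule ℤ (Fin n → ℚ) where
  carrier := {x | IsIntVec x ∧ ∃ k : ℤ, ∑ i, x i = 2 * k}
  zero_mem' := by
    refine ⟨fun i => ⟨0, by simp⟩, 0, by simp⟩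
  add_mem' := by
    rintro a b ⟨ha, k₁, hk₁⟩ ⟨hb, k₂, hk₂⟩
    refine ⟨fun i => ?_, k₁ + k₂, ?_⟩
    · obtain ⟨m, hm⟩ := ha i
      obtain ⟨m', hm'⟩ := hb i
      exact ⟨m + m', by simp [Pi.add_apply, hm, hm']⟩
    · simp only [Pi.add_apply, Finset.sum_add_distrib, hk₁, hk₂]
      push_cast
      ring
  smul_mem' := by
    rintro c x ⟨hx, k, hk⟩
    refine ⟨fun i => ?_, c * k, ?_⟩
    · obtain ⟨m, hm⟩ := hx i
      exact ⟨c * m, by simp [Pi.smul_apply, hm, zsmul_eq_mul]⟩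
    · have : ∑ i, (c • x) i = c • ∑ i, x i := by
        simp [Pi.smul_apply, Finset.smul_sum]
      rw [this, hk, zsmul_eq_mul]
      push_cast
      ring

/-- The root lattice `Aₙ = {x ∈ ℤⁿ⁺¹ : ∑ xᵢ = 0}`. -/
def latA (n : ℕ) : Submodule ℤ (Fin (n + 1) → ℚ) where
  carrier := {x | IsIntVec x ∧ ∑ i, x i = 0}
  zero_mem' := ⟨fun i => ⟨0, by simp⟩, by simp⟩
  add_mem' := by
    rintro a b ⟨ha, hka⟩ ⟨hb, hkb⟩
    refine ⟨fun i => ?_, ?_⟩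
    · obtain ⟨m, hm⟩ := ha i
      obtain ⟨m', hm'⟩ := hb i
      exact ⟨m + m', by simp [Pi.add_apply, hm, hm']⟩
    · simp [Pi.add_apply, Finset.sum_add_distrib, hka, hkb]
  smul_mem' := by
    rintro c x ⟨hx, hk⟩
    refine ⟨fun i => ?_, ?_⟩
    · obtain ⟨m, hm⟩ := hx i
      exact ⟨c * m, by simp [Pi.smul_apply, hm, zsmul_eq_mul]⟩
    · have : ∑ i, (c • x) i = c • ∑ i, x i := by
        simp [Pi.smul_apply, Finset.smul_sum]
      rw [this, hk, smul_zero]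

/-- The root lattice `E₈ = D₈ + ℤ·(½,…,½)`. -/
def latE8 : Submodule ℤ (Fin 8 → ℚ) :=
  latD 8 ⊔ Submodule.span ℤ {fun _ => (1 : ℚ) / 2}

/-- The root sublattice of `E`: the `ℤ`-span of its vectors of norm 2. -/
def rootSublattice (B : V →ₗ[ℚ] V →ₗ[ℚ] ℚ) (E : Submodule ℤ V) : Submodule ℤ V :=
  Submodule.span ℤ {v : V | v ∈ E ∧ B v v = 2}

/-- The set of even-norm vectors of `N` (the even sublattice, as a set). -/
def evenSet (B : V →ₗ[ℚ] V →ₗ[ℚ] ℚ) (N : Submodule ℤ V) : Set V :=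
  {x | x ∈ N ∧ ∃ n : ℤ, B x x = 2 * n}

/-- The unordered pair of root sublattices of `E₁` and `E₂` is isometric to the pair
`(M₁, M₂)`. -/
def RootPairIso {W₁ W₂ : Type*} [AddCommGroup W₁] [Module ℚ W₁]
    [AddCommGroup W₂] [Module ℚ W₂]
    (B : V →ₗ[ℚ] V →ₗ[ℚ] ℚ) (E₁ E₂ : Submodule ℤ V)
    (C₁ : W₁ → W₁ → ℚ) (M₁ : Submodule ℤ W₁)
    (C₂ : W₂ → W₂ → ℚ) (M₂ : Submodule ℤ W₂) : Prop :=
  (LatticeIsometric (fun x y => B x y) C₁ (rootSublattice B E₁) M₁ ∧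
    LatticeIsometric (fun x y => B x y) C₂ (rootSublattice B E₂) M₂) ∨
  (LatticeIsometric (fun x y => B x y) C₂ (rootSublattice B E₁) M₂ ∧
    LatticeIsometric (fun x y => B x y) C₁ (rootSublattice B E₂) M₁)

/-- The unordered pair of root sublattices of `E₁`, `E₂` is one of the four exceptional pairs
`{E₈³, D₈³}`, `{D₁₆⊕E₈, A₁₅⊕D₉}`, `{D₁₂², A₁₂²}`, `{D₂₄, A₂₄}`. -/
def IsExceptionalPair (B : V →ₗ[ℚ] V →ₗ[ℚ] ℚ) (E₁ E₂ : Submodule ℤ V) : Prop :=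
  RootPairIso B E₁ E₂
    (prodForm (stdDot 8) (prodForm (stdDot 8) (stdDot 8))) (latE8.prod (latE8.prod latE8))
    (prodForm (stdDot 8) (prodForm (stdDot 8) (stdDot 8))) ((latD 8).prod ((latD 8).prod (latD 8))) ∨
  RootPairIso B E₁ E₂
    (prodForm (stdDot 16) (stdDot 8)) ((latD 16).prod latE8)
    (prodForm (stdDot 16) (stdDot 9)) ((latA 15).prod (latD 9)) ∨
  RootPairIso B E₁ E₂
    (prodForm (stdDot 12) (stdDot 12)) ((latD 12).prod (latD 12))
    (prodForm (stdDot 13) (stdDot 13)) ((latA 12).prod (latA 12)) ∨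
  RootPairIso B E₁ E₂
    (stdDot 24) (latD 24)
    (stdDot 25) (latA 24)

/-!
Let `E₁` and `E₂` be the even neighbors with roots `D₁₆ ⊕ E₈` and `A₁₅ ⊕ D₉`, and let `a` be an arm
of `L⁺`, of norm `3`. Use `D₁₆ ⊕ E₈ ⊆ E₁` to put coordinates `ℚ¹⁶ ⊕ ℚ⁸` on the ambient space. Then
`2a ∈ E₁`, and its component in `ℚ⁸` lies in `E₈`, because `E₈` is unimodular.

A root of `E₁` pairing integrally with `a` lies in `N`, hence in `E₂`. So the roots of `D₁₆ ⊕ E₈`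
pairing evenly with `2a` embed into `A₁₅ ⊕ D₉ ⊆ ℤ¹⁶ ⊕ ℤ⁹`. By Bessel's inequality the target has at
most `17` pairwise orthogonal roots, whereas the source has `18` if the `ℚ¹⁶`-component of `2a` is
integral; hence that component has coordinates in `ℤ + 1/2`. Moreover no cubic lattice contains `E₇`
or `E₈`, since two arms of a `D₄` diagram in `ℤⁿ` agree modulo `2`; hence the `E₈`-component of `2a`
is nonzero with norm divisible by `4`. As `2a` has norm `12`, the components `p` and `q` of `a` have
norms `(1, 2)` or `(2, 1)`, and the coordinates of `p` are odd multiples of `1/4`.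

The root `h` of `L⁺` lies in `D₁₆` or in `E₈`. Differences of arms lie in `E₁`, so their
`ℚ¹⁶`-components are integral or have coordinates in `ℤ + 1/2`, and a vector of the latter kind has
norm at least `4`. Among five pairwise orthogonal arms three are of the same kind, by the pigeonhole
principle, and comparing norms of their sums and differences rules them out.
-/

/-! ### Roots in cubic lattices -/

theorem odd_sum_iff_odd_card {κ : Type*} (s : Finset κ) (f : κ → ℤ) :
    Odd (∑ k ∈ s, f k) ↔ Odd (s.filter fun k ↦ Odd (f k)).card := by
  classical
  induction s using Finset.induction_on with
  | empty => simp
  | insert k s hk ih =>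
    rw [Finset.sum_insert hk, Finset.filter_insert, Int.odd_add, ← Int.not_odd_iff_even, ih]
    split_ifs with hf <;> simp [hk, hf, Nat.odd_add_one]

section OddSupport

variable {κ : Type*} [Fintype κ]

/-- The set of odd coordinates of an integral vector, i.e. its reduction modulo `2`. -/
def oddSupport (x : κ → ℤ) : Finset κ := {k | Odd (x k)}

theorem mem_oddSupport {x : κ → ℤ} {k : κ} : k ∈ oddSupport x ↔ Odd (x k) := by
  simp [oddSupport]

theorem card_oddSupport_modEq (x : κ → ℤ) : ((oddSupport x).card : ℤ) ≡ x ⬝ᵥ x [ZMOD 4] := by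
  have hterm (k : κ) : (if Odd (x k) then 1 else 0) ≡ x k * x k [ZMOD 4] := by
    split_ifs with h
    · exact (by simpa [pow_two] using Int.sq_mod_four_eq_one_of_odd h : x k * x k % 4 = 1).symm
    · obtain ⟨m, hm⟩ := Int.not_odd_iff_even.1 h
      exact Int.modEq_iff_dvd.2 ⟨m * m, by rw [hm]; ring⟩
  rw [oddSupport, Finset.card_filter, Nat.cast_sum]
  push_cast
  exact Int.ModEq.sum fun k _ ↦ hterm k

theorem card_oddSupport_le (x : κ → ℤ) : ((oddSupport x).card : ℤ) ≤ x ⬝ᵥ x := by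
  rw [oddSupport, Finset.card_filter, Nat.cast_sum]
  refine Finset.sum_le_sum fun k _ ↦ ?_
  split_ifs with h
  · have : x k ≠ 0 := by rintro h0; simp [h0] at h
    have := Int.one_le_abs this
    push_cast
    nlinarith [abs_mul_abs_self (x k)]
  · simpa using mul_self_nonneg (x k)

theorem card_oddSupport_of_norm_two {x : κ → ℤ} (hx : x ⬝ᵥ x = 2) : (oddSupport x).card = 2 := by
  have hle := card_oddSupport_le x
  have hmod := card_oddSupport_modEq x
  rw [hx] at hle hmod
  rw [Int.ModEq] at hmod
  omega

theorem odd_dotProduct_iff [DecidableEq κ] (x y : κ → ℤ) :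
    Odd (x ⬝ᵥ y) ↔ Odd (oddSupport x ∩ oddSupport y).card := by
  have hfilter : (Finset.univ.filter fun k ↦ Odd (x k * y k)) = oddSupport x ∩ oddSupport y := by
    ext k
    simp [mem_oddSupport, Int.odd_mul]
  rw [dotProduct, odd_sum_iff_odd_card, hfilter]

theorem oddSupport_eq_of_even_dotProduct {x y : κ → ℤ} (hx : x ⬝ᵥ x = 2) (hy : y ⬝ᵥ y = 2)
    (hxy : Even (x ⬝ᵥ y)) {k : κ} (hkx : k ∈ oddSupport x) (hky : k ∈ oddSupport y) :
    oddSupport x = oddSupport y := by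
  classical
  have hpos : 0 < (oddSupport x ∩ oddSupport y).card :=
    Finset.card_pos.2 ⟨k, Finset.mem_inter.2 ⟨hkx, hky⟩⟩
  have heven : ¬ Odd (oddSupport x ∩ oddSupport y).card := by
    rwa [← odd_dotProduct_iff, Int.not_odd_iff_even]
  have hcx := card_oddSupport_of_norm_two hx
  have hcy := card_oddSupport_of_norm_two hy
  have hle := Finset.card_le_card
    (Finset.inter_subset_left (s₁ := oddSupport x) (s₂ := oddSupport y))
  have hcard : (oddSupport x ∩ oddSupport y).card = 2 := by
    rw [Nat.odd_iff] at heven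
    omega
  rw [← Finset.eq_of_subset_of_card_le Finset.inter_subset_left (hcx.trans hcard.symm).le,
    Finset.eq_of_subset_of_card_le Finset.inter_subset_right (hcy.trans hcard.symm).le]

theorem even_dotProduct_add_of_oddSupport_eq {x y : κ → ℤ} (h : oddSupport x = oddSupport y)
    (e : κ → ℤ) : Even (e ⬝ᵥ x + e ⬝ᵥ y) := by
  classical
  rw [← Int.not_odd_iff_even, Int.odd_add, ← Int.not_odd_iff_even, odd_dotProduct_iff,
    odd_dotProduct_iff, h]
  tauto

theorem exists_oddSupport_eq_of_D4 {c : κ → ℤ} {a : Fin 3 → κ → ℤ} (hc : c ⬝ᵥ c = 2)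
    (ha : ∀ i, a i ⬝ᵥ a i = 2) (hca : ∀ i, Odd (c ⬝ᵥ a i))
    (haa : ∀ i j, i ≠ j → Even (a i ⬝ᵥ a j)) :
    ∃ i j, i < j ∧ oddSupport (a i) = oddSupport (a j) := by
  classical
  have hmeet (i : Fin 3) : ∃ k ∈ oddSupport c, k ∈ oddSupport (a i) := by
    have hodd := (odd_dotProduct_iff c (a i)).1 (hca i)
    obtain ⟨k, hk⟩ := Finset.card_pos.1 hodd.pos
    exact ⟨k, Finset.mem_inter.1 hk⟩
  choose f hfc hfa using hmeet
  obtain ⟨i, -, j, -, hij, hf⟩ := Finset.exists_ne_map_eq_of_card_lt_of_maps_to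
    (s := Finset.univ) (t := oddSupport c) (f := f)
    (by simp [card_oddSupport_of_norm_two hc]) fun i _ ↦ hfc i
  have heq : oddSupport (a i) = oddSupport (a j) :=
    oddSupport_eq_of_even_dotProduct (ha i) (ha j) (haa i j hij) (hfa i) (hf ▸ hfa j)
  rcases hij.lt_or_gt with h | h
  exacts [⟨i, j, h, heq⟩, ⟨j, i, h, heq.symm⟩]

end OddSupport

/-- `T` restricts to an isometry from `Φ`, with the form `C`, into the cubic lattice `ℤ^κ`. -/
def IsIntegralIsometryOn {W κ : Type*} [Fintype κ] (C : W → W → ℚ) (Φ : Set W) (T : W → κ → ℤ) :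
    Prop :=
  ∀ x ∈ Φ, ∀ y ∈ Φ, ((T x ⬝ᵥ T y : ℤ) : ℚ) = C x y

section IntegralIsometry

variable {U W κ : Type*} [Fintype κ] {C : W → W → ℚ} {Φ : Set W} {T : W → κ → ℤ}

theorem IsIntegralIsometryOn.comp {C' : U → U → ℚ} {Φ' : Set U} {φ : U → W}
    (hT : IsIntegralIsometryOn C Φ T) (hφ : Set.MapsTo φ Φ' Φ)
    (hC : ∀ x ∈ Φ', ∀ y ∈ Φ', C (φ x) (φ y) = C' x y) : IsIntegralIsometryOn C' Φ' (T ∘ φ) :=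
  fun x hx y hy ↦ (hT _ (hφ hx) _ (hφ hy)).trans (hC x hx y hy)

theorem IsIntegralIsometryOn.dotProduct_eq (hT : IsIntegralIsometryOn C Φ T) {x y : W}
    (hx : x ∈ Φ) (hy : y ∈ Φ) {n : ℤ} (h : C x y = n) : T x ⬝ᵥ T y = n := by
  exact_mod_cast (hT x hx y hy).trans h

theorem IsIntegralIsometryOn.false_of_D4 (hT : IsIntegralIsometryOn C Φ T)
    {c : W} {a : Fin 3 → W} (hc : c ∈ Φ) (ha : ∀ i, a i ∈ Φ) (hcc : C c c = 2)
    (hca : ∀ i, C c (a i) = -1) (haa : ∀ i j, C (a i) (a j) = if i = j then 2 else 0)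
    (hsep : ∀ i j, i < j → ∃ e ∈ Φ, ∃ n : ℤ, C e (a i) + C e (a j) = 2 * n + 1) : False := by
  have hc2 : T c ⬝ᵥ T c = 2 := hT.dotProduct_eq hc hc (by simpa using hcc)
  have ha2 (i : Fin 3) : T (a i) ⬝ᵥ T (a i) = 2 :=
    hT.dotProduct_eq (ha i) (ha i) (by simpa using haa i i)
  have hca1 (i : Fin 3) : Odd (T c ⬝ᵥ T (a i)) := by
    rw [hT.dotProduct_eq hc (ha i) (n := -1) (by simpa using hca i)]
    decide
  have haa0 (i j : Fin 3) (hij : i ≠ j) : Even (T (a i) ⬝ᵥ T (a j)) := by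
    rw [hT.dotProduct_eq (ha i) (ha j) (n := 0) (by simpa [hij] using haa i j)]
    exact Even.zero
  obtain ⟨i, j, hij, heq⟩ := exists_oddSupport_eq_of_D4 hc2 ha2 hca1 haa0
  obtain ⟨e, he, n, hn⟩ := hsep i j hij
  have hsum : T e ⬝ᵥ T (a i) + T e ⬝ᵥ T (a j) = 2 * n + 1 := by
    rw [← hT e he _ (ha i), ← hT e he _ (ha j)] at hn
    exact_mod_cast hn
  exact Int.not_odd_iff_even.2 (even_dotProduct_add_of_oddSupport_eq heq (T e)) ⟨n, hsum⟩

end IntegralIsometry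

section Bessel

theorem intCast_dotProduct {κ : Type*} [Fintype κ] (v w : κ → ℤ) :
    ((v ⬝ᵥ w : ℤ) : ℚ) = (fun k ↦ (v k : ℚ)) ⬝ᵥ fun k ↦ (w k : ℚ) := by
  simp [dotProduct]

theorem dotProduct_self_nonneg {κ : Type*} [Fintype κ] (x : κ → ℚ) : 0 ≤ x ⬝ᵥ x :=
  dotProduct_self_star_nonneg x

variable {κ ι : Type*} [Fintype κ] [Fintype ι]

theorem sum_sq_dotProduct_le {n : ℚ} (hn : 0 < n) {v : ι → κ → ℚ} (hv : ∀ i, v i ⬝ᵥ v i = n)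
    (hort : Pairwise fun i j ↦ v i ⬝ᵥ v j = 0) (u : κ → ℚ) :
    ∑ i, (u ⬝ᵥ v i) ^ 2 ≤ n * (u ⬝ᵥ u) := by
  set p : κ → ℚ := ∑ i, (u ⬝ᵥ v i) • v i with hp
  have hup : u ⬝ᵥ p = ∑ i, (u ⬝ᵥ v i) ^ 2 := by
    simp only [hp, dotProduct_sum, dotProduct_smul, smul_eq_mul, pow_two]
  have hpv (i : ι) : v i ⬝ᵥ p = n * (u ⬝ᵥ v i) := by
    rw [hp, dotProduct_sum, Finset.sum_eq_single i]
    · rw [dotProduct_smul, hv, smul_eq_mul, mul_comm]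
    · intro j _ hji
      rw [dotProduct_smul, hort hji.symm, smul_zero]
    · simp
  have hpp : p ⬝ᵥ p = n * ∑ i, (u ⬝ᵥ v i) ^ 2 := by
    nth_rewrite 1 [hp]
    simp only [sum_dotProduct, smul_dotProduct, hpv, smul_eq_mul, Finset.mul_sum]
    exact Finset.sum_congr rfl fun i _ ↦ by ring
  have hnonneg : 0 ≤ (n • u - p) ⬝ᵥ (n • u - p) := dotProduct_self_nonneg _
  have hexpand : (n • u - p) ⬝ᵥ (n • u - p) =
      n * (n * (u ⬝ᵥ u) - ∑ i, (u ⬝ᵥ v i) ^ 2) := by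
    simp only [sub_dotProduct, dotProduct_sub, smul_dotProduct, dotProduct_smul, smul_eq_mul,
      dotProduct_comm p u, hup, hpp]
    ring
  rw [hexpand] at hnonneg
  linarith [nonneg_of_mul_nonneg_right hnonneg hn]

theorem sum_sq_le_of_orthogonal {v : ι → κ → ℤ} (hv : ∀ i, v i ⬝ᵥ v i = 2)
    (hort : Pairwise fun i j ↦ v i ⬝ᵥ v j = 0) (u : κ → ℚ) :
    ∑ i, (u ⬝ᵥ fun k ↦ (v i k : ℚ)) ^ 2 ≤ 2 * (u ⬝ᵥ u) := by
  refine sum_sq_dotProduct_le two_pos (fun i ↦ ?_) (fun i j hij ↦ ?_) u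
  · simp [← intCast_dotProduct, hv]
  · simp [← intCast_dotProduct, hort hij]

theorem sum_sq_inr_le_of_orthogonal {α β : Type*} [Fintype α] [Fintype β]
    {v : ι → α ⊕ β → ℤ} (hv : ∀ i, v i ⬝ᵥ v i = 2)
    (hort : Pairwise fun i j ↦ v i ⬝ᵥ v j = 0) (k : β) : ∑ i, v i (.inr k) ^ 2 ≤ 2 := by
  classical
  have hbound := sum_sq_le_of_orthogonal hv hort (Pi.single (.inr k) 1)
  simp only [single_one_dotProduct, Pi.single_eq_same, mul_one] at hbound
  exact_mod_cast hbound

/-- Pairing with the projection `eₖ - (1/n)(1,…,1)`, of norm less than `1`, also reads off the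
coordinate `k`, so Bessel's inequality becomes strict. -/
theorem sum_sq_inl_le_of_orthogonal {α β : Type*} [Fintype α] [Fintype β]
    {v : ι → α ⊕ β → ℤ} (hv : ∀ i, v i ⬝ᵥ v i = 2) (hort : Pairwise fun i j ↦ v i ⬝ᵥ v j = 0)
    (hsum : ∀ i, ∑ k, v i (.inl k) = 0) (k : α) : ∑ i, v i (.inl k) ^ 2 ≤ 1 := by
  classical
  have hn : (0 : ℚ) < Fintype.card α := by exact_mod_cast Fintype.card_pos_iff.2 ⟨k⟩
  set n : ℚ := (Fintype.card α : ℚ)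
  have hbound := sum_sq_le_of_orthogonal hv hort
    (Sum.elim (Pi.single k 1 - fun _ ↦ n⁻¹) 0)
  have hdot (i : ι) : (Sum.elim (Pi.single k 1 - fun _ ↦ n⁻¹) 0 : α ⊕ β → ℚ) ⬝ᵥ
      (fun k ↦ (v i k : ℚ)) = v i (.inl k) := by
    have h0 : ∑ k, (v i (.inl k) : ℚ) = 0 := by exact_mod_cast hsum i
    simp [dotProduct, sub_mul, Finset.sum_sub_distrib, ← Finset.mul_sum, h0, Pi.single_apply]
  have hself : (Sum.elim (Pi.single k 1 - fun _ ↦ n⁻¹) 0 : α ⊕ β → ℚ) ⬝ᵥ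
      (Sum.elim (Pi.single k 1 - fun _ ↦ n⁻¹) 0) = 1 - n⁻¹ := by
    have hconst : (fun _ : α ↦ n⁻¹) ⬝ᵥ (fun _ ↦ n⁻¹) = n⁻¹ := by
      simp [dotProduct, n, hn.ne']
    simp [sumElim_dotProduct_sumElim, sub_dotProduct, dotProduct_sub, hconst]
  simp only [hdot, hself] at hbound
  have hlt : ∑ i, (v i (.inl k) : ℚ) ^ 2 < 2 := by linarith [inv_pos.2 hn]
  exact Int.lt_add_one_iff.1 (by exact_mod_cast hlt)

theorem two_mul_card_le_of_orthogonal {α β : Type*} [Fintype α] [Fintype β]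
    {v : ι → α ⊕ β → ℤ} (hv : ∀ i, v i ⬝ᵥ v i = 2)
    (hort : Pairwise fun i j ↦ v i ⬝ᵥ v j = 0) (hsum : ∀ i, ∑ k, v i (.inl k) = 0) :
    2 * Fintype.card ι ≤ Fintype.card α + 2 * Fintype.card β := by
  have htotal : ∑ i, v i ⬝ᵥ v i = ∑ k, ∑ i, v i (.inl k) ^ 2 + ∑ k, ∑ i, v i (.inr k) ^ 2 := by
    simp only [dotProduct, Fintype.sum_sum_type, Finset.sum_add_distrib, ← pow_two]
    rw [Finset.sum_comm (f := fun i k ↦ v i (.inl k) ^ 2),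
      Finset.sum_comm (f := fun i k ↦ v i (.inr k) ^ 2)]
  have hα := Finset.sum_le_card_nsmul Finset.univ _ _ fun k _ ↦
    sum_sq_inl_le_of_orthogonal hv hort hsum k
  have hβ := Finset.sum_le_card_nsmul Finset.univ _ _ fun k _ ↦
    sum_sq_inr_le_of_orthogonal hv hort k
  simp only [hv, Finset.sum_const, Finset.card_univ, nsmul_eq_mul] at htotal hα hβ
  omega

end Bessel

/-! ### Half-integral vectors -/

section HalfIntegral

variable {n : ℕ} {x y : Fin n → ℚ}

theorem IsIntVec.add (hx : IsIntVec x) (hy : IsIntVec y) : IsIntVec (x + y) := fun i ↦ by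
  obtain ⟨a, ha⟩ := hx i
  obtain ⟨b, hb⟩ := hy i
  exact ⟨a + b, by simp [ha, hb]⟩

theorem IsIntVec.neg (hx : IsIntVec x) : IsIntVec (-x) := fun i ↦ by
  obtain ⟨a, ha⟩ := hx i
  exact ⟨-a, by simp [ha]⟩

theorem IsIntVec.sub (hx : IsIntVec x) (hy : IsIntVec y) : IsIntVec (x - y) :=
  sub_eq_add_neg x y ▸ hx.add hy.neg

theorem IsIntVec.smul (c : ℤ) (hx : IsIntVec x) : IsIntVec ((c : ℚ) • x) := fun i ↦ by
  obtain ⟨a, ha⟩ := hx i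
  exact ⟨c * a, by simp [ha]⟩

theorem IsIntVec.exists_eq (hx : IsIntVec x) : ∃ w : Fin n → ℤ, x = fun i ↦ (w i : ℚ) := by
  choose w hw using hx
  exact ⟨w, funext hw⟩

/-- All coordinates of `x` lie in `ℤ + 1/2`. -/
def IsHalfOdd (x : Fin n → ℚ) : Prop := ∀ i, ∃ m : ℤ, x i = m + 1 / 2

theorem IsHalfOdd.add_isIntVec (hx : IsHalfOdd x) (hy : IsIntVec y) : IsHalfOdd (x + y) :=
  fun i ↦ by
    obtain ⟨a, ha⟩ := hx i
    obtain ⟨b, hb⟩ := hy i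
    exact ⟨a + b, by rw [Pi.add_apply, ha, hb]; push_cast; ring⟩

theorem IsHalfOdd.add (hx : IsHalfOdd x) (hy : IsHalfOdd y) : IsIntVec (x + y) := fun i ↦ by
  obtain ⟨a, ha⟩ := hx i
  obtain ⟨b, hb⟩ := hy i
  exact ⟨a + b + 1, by rw [Pi.add_apply, ha, hb]; push_cast; ring⟩

theorem IsHalfOdd.neg (hx : IsHalfOdd x) : IsHalfOdd (-x) := fun i ↦ by
  obtain ⟨a, ha⟩ := hx i
  exact ⟨-a - 1, by rw [Pi.neg_apply, ha]; push_cast; ring⟩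

theorem IsHalfOdd.sub (hx : IsHalfOdd x) (hy : IsHalfOdd y) : IsIntVec (x - y) :=
  sub_eq_add_neg x y ▸ hx.add hy.neg

theorem IsHalfOdd.sub_isIntVec (hx : IsHalfOdd x) (hy : IsIntVec y) : IsHalfOdd (x - y) :=
  sub_eq_add_neg x y ▸ hx.add_isIntVec hy.neg

theorem IsHalfOdd.div_four_le_norm (hx : IsHalfOdd x) : (n : ℚ) / 4 ≤ x ⬝ᵥ x := by
  have hterm (i : Fin n) : 1 / 4 ≤ x i * x i := by
    obtain ⟨m, hm⟩ := hx i
    have hm' : (0 : ℚ) ≤ m * (m + 1) := by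
      exact_mod_cast (by rcases le_or_gt 0 m with h | h <;> nlinarith : 0 ≤ m * (m + 1))
    rw [hm]
    linarith
  calc (n : ℚ) / 4 = ∑ _i : Fin n, 1 / 4 := by
        rw [Finset.sum_const, Finset.card_univ, Fintype.card_fin, nsmul_eq_mul, mul_one_div]
    _ ≤ x ⬝ᵥ x := Finset.sum_le_sum fun i _ ↦ hterm i

/-- `x ∈ ℤⁿ ∪ (ℤ + 1/2)ⁿ`; for `n ≥ 2` these are the vectors of the dual lattice of `Dₙ`. -/
def IntOrHalf (x : Fin n → ℚ) : Prop := IsIntVec x ∨ IsHalfOdd x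

theorem IntOrHalf.add_isIntVec (hx : IntOrHalf x) (hy : IsIntVec y) : IntOrHalf (x + y) :=
  hx.imp (·.add hy) (·.add_isIntVec hy)

theorem intCast_ne_add_half (k m : ℤ) : (k : ℚ) ≠ m + 1 / 2 := fun h ↦ by
  have h' : (2 * k : ℚ) = 2 * m + 1 := by linarith
  have : 2 * k = 2 * m + 1 := by exact_mod_cast h'
  omega

theorem exists_eq_or_eq_add_half {q : ℚ} {m : ℤ} (h : 2 * q = m) :
    (∃ k : ℤ, q = k) ∨ ∃ k : ℤ, q = k + 1 / 2 := by
  obtain ⟨k, rfl⟩ | ⟨k, rfl⟩ := Int.even_or_odd m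
  · exact .inl ⟨k, by push_cast at h; linarith⟩
  · exact .inr ⟨k, by push_cast at h; linarith⟩

/-- The vector `eᵢ + t eⱼ`, where `i = j` is allowed; for `i ≠ j` it is a root of `Dₙ`. -/
def signedPair (i : Fin n) (t : ℤˣ) (j : Fin n) : Fin n → ℚ :=
  Pi.single i 1 + Pi.single j ((t : ℤ) : ℚ)

theorem signedPair_dotProduct (i : Fin n) (t : ℤˣ) (j : Fin n) (x : Fin n → ℚ) :
    signedPair i t j ⬝ᵥ x = x i + (t : ℤ) * x j := by
  simp [signedPair, add_dotProduct]

theorem dotProduct_signedPair (i : Fin n) (t : ℤˣ) (j : Fin n) (x : Fin n → ℚ) :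
    x ⬝ᵥ signedPair i t j = x i + (t : ℤ) * x j := by
  rw [dotProduct_comm, signedPair_dotProduct]

theorem signedPair_norm {i j : Fin n} (hij : i ≠ j) (t : ℤˣ) :
    signedPair i t j ⬝ᵥ signedPair i t j = 2 := by
  have htt : ((t : ℤ) : ℚ) * (t : ℤ) = 1 := by
    rcases Int.units_eq_one_or t with rfl | rfl <;> simp
  rw [signedPair_dotProduct]
  simp only [signedPair, Pi.add_apply, Pi.single_eq_same, Pi.single_eq_of_ne hij,
    Pi.single_eq_of_ne' hij]
  linarith

theorem signedPair_mem_latD (i : Fin n) (t : ℤˣ) (j : Fin n) : signedPair i t j ∈ latD n := by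
  refine ⟨fun k ↦ ⟨(Pi.single i 1 + Pi.single j (t : ℤ) : Fin n → ℤ) k, ?_⟩, ?_⟩
  · simp [signedPair, Pi.single_apply]
  · have hsum : ∑ k, signedPair i t j k = 1 + (t : ℤ) := by
      simp [signedPair, Finset.sum_add_distrib]
    rw [hsum]
    rcases Int.units_eq_one_or t with rfl | rfl
    exacts [⟨1, by norm_num⟩, ⟨0, by norm_num⟩]

theorem intOrHalf_of_forall_mem_latD (hx : ∀ u ∈ latD n, ∃ m : ℤ, u ⬝ᵥ x = m) :
    IntOrHalf x := by
  have hpair (i j : Fin n) : ∃ m : ℤ, x i + x j = m := by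
    simpa [signedPair_dotProduct] using hx _ (signedPair_mem_latD i 1 j)
  by_cases hint : ∃ i, ∃ m : ℤ, x i = m
  · obtain ⟨i, a, ha⟩ := hint
    refine .inl fun j ↦ ?_
    obtain ⟨b, hb⟩ := hpair i j
    exact ⟨b - a, by push_cast; linarith⟩
  · refine .inr fun i ↦ ?_
    obtain ⟨m, hm⟩ := hpair i i
    exact (exists_eq_or_eq_add_half (by linarith)).resolve_left fun h ↦ hint ⟨i, h⟩

end HalfIntegral

section LatE8

variable {u v : Fin 8 → ℚ}

theorem one_half_mem_latE8 : (fun _ ↦ 1 / 2) ∈ latE8 :=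
  Submodule.mem_sup_right (Submodule.mem_span_singleton_self _)

theorem mem_latE8_iff_exists :
    v ∈ latE8 ↔ ∃ d ∈ latD 8, ∃ c : ℤ, v = d + fun _ ↦ (c / 2 : ℚ) := by
  have hsmul (c : ℤ) : c • (fun _ : Fin 8 ↦ (1 : ℚ) / 2) = fun _ ↦ (c / 2 : ℚ) := by
    ext
    rw [Pi.smul_apply, zsmul_eq_mul, mul_one_div]
  simp only [latE8, Submodule.mem_sup, Submodule.mem_span_singleton, exists_exists_eq_and, hsmul,
    eq_comm (a := v)]

theorem mem_latE8_iff : v ∈ latE8 ↔ IntOrHalf v ∧ ∃ k : ℤ, ∑ i, v i = 2 * k := by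
  rw [mem_latE8_iff_exists]
  constructor
  · rintro ⟨d, ⟨hd, k, hk⟩, c, rfl⟩
    refine ⟨?_, k + 2 * c, ?_⟩
    · rw [add_comm]
      refine IntOrHalf.add_isIntVec ?_ hd
      obtain ⟨b, rfl⟩ | ⟨b, rfl⟩ := Int.even_or_odd c
      · exact .inl fun _ ↦ ⟨b, by push_cast; ring⟩
      · exact .inr fun _ ↦ ⟨b, by push_cast; ring⟩
    · simp only [Pi.add_apply, Finset.sum_add_distrib, hk, Finset.sum_const, Finset.card_univ,
        Fintype.card_fin, nsmul_eq_mul]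
      push_cast
      ring
  · rintro ⟨hint | hhalf, k, hk⟩
    · exact ⟨v, ⟨hint, k, hk⟩, 0, by ext; simp⟩
    · refine ⟨v - fun _ ↦ 1 / 2, ⟨hhalf.sub fun _ ↦ ⟨0, by norm_num⟩, k - 2, ?_⟩, 1, by simp⟩
      simp only [Pi.sub_apply, Finset.sum_sub_distrib, hk, Finset.sum_const, Finset.card_univ,
        Fintype.card_fin, nsmul_eq_mul]
      push_cast
      ring

theorem exists_dotProduct_self_eq_of_mem_latD {n : ℕ} {d : Fin n → ℚ} (hd : d ∈ latD n) :
    ∃ m : ℤ, d ⬝ᵥ d = 2 * m := by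
  obtain ⟨hint, k, hk⟩ := hd
  obtain ⟨w, rfl⟩ := hint.exists_eq
  have hpar : Even (w ⬝ᵥ w - ∑ i, w i) := by
    rw [dotProduct, ← Finset.sum_sub_distrib]
    exact Finset.even_sum _ fun i _ ↦ by
      rw [show w i * w i - w i = (w i - 1) * (w i - 1 + 1) by ring]
      exact Int.even_mul_succ_self _
  obtain ⟨m, hm⟩ := hpar
  refine ⟨m + k, ?_⟩
  have hm' : ((w ⬝ᵥ w : ℤ) : ℚ) - ∑ i, (w i : ℚ) = m + m := by exact_mod_cast hm
  rw [hk, intCast_dotProduct] at hm'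
  push_cast
  linarith

theorem exists_dotProduct_self_eq_of_mem_latE8 (hv : v ∈ latE8) : ∃ m : ℤ, v ⬝ᵥ v = 2 * m := by
  obtain ⟨d, hd, c, rfl⟩ := mem_latE8_iff_exists.1 hv
  obtain ⟨m, hm⟩ := exists_dotProduct_self_eq_of_mem_latD hd
  obtain ⟨-, k, hk⟩ := hd
  have hcross : d ⬝ᵥ (fun _ ↦ (c / 2 : ℚ)) = c * k := by
    rw [dotProduct, ← Finset.sum_mul, hk]
    ring
  have hself : (fun _ ↦ (c / 2 : ℚ)) ⬝ᵥ (fun _ : Fin 8 ↦ (c / 2 : ℚ)) = 2 * c ^ 2 := by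
    simp only [dotProduct, Finset.sum_const, Finset.card_univ, Fintype.card_fin, nsmul_eq_mul]
    push_cast
    ring
  refine ⟨m + c * k + c ^ 2, ?_⟩
  rw [add_dotProduct, dotProduct_add, dotProduct_add, (dotProduct_comm _ _).trans hcross, hm,
    hcross, hself]
  push_cast
  ring

theorem exists_dotProduct_eq_of_mem_latE8 (hu : u ∈ latE8) (hv : v ∈ latE8) :
    ∃ m : ℤ, u ⬝ᵥ v = m := by
  obtain ⟨a, ha⟩ := exists_dotProduct_self_eq_of_mem_latE8 hu
  obtain ⟨b, hb⟩ := exists_dotProduct_self_eq_of_mem_latE8 hv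
  obtain ⟨c, hc⟩ := exists_dotProduct_self_eq_of_mem_latE8 (add_mem hu hv)
  refine ⟨c - a - b, ?_⟩
  rw [add_dotProduct, dotProduct_add, dotProduct_add, dotProduct_comm v u, ha, hb] at hc
  push_cast
  linarith

theorem mem_latE8_of_forall_dotProduct (hv : ∀ u ∈ latE8, ∃ m : ℤ, u ⬝ᵥ v = m) : v ∈ latE8 := by
  refine mem_latE8_iff.2
    ⟨intOrHalf_of_forall_mem_latD fun u hu ↦ hv u (Submodule.mem_sup_left hu), ?_⟩
  obtain ⟨m, hm⟩ := hv _ one_half_mem_latE8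
  refine ⟨m, ?_⟩
  rw [← hm, dotProduct, ← Finset.mul_sum]
  ring

end LatE8

/-! ### Root systems orthogonal to a vector of `E₈` modulo `2` -/

section Reflection

variable {κ : Type*} [Fintype κ]

/-- The reflection in the hyperplane orthogonal to a vector `v` of norm `2`. -/
def rootReflection (v x : κ → ℚ) : κ → ℚ := x - (x ⬝ᵥ v) • v

theorem rootReflection_dotProduct_comm (v x y : κ → ℚ) :
    rootReflection v x ⬝ᵥ y = x ⬝ᵥ rootReflection v y := by
  simp only [rootReflection, sub_dotProduct, dotProduct_sub, smul_dotProduct, dotProduct_smul,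
    smul_eq_mul, dotProduct_comm y v]
  ring

theorem rootReflection_dotProduct_rootReflection {v : κ → ℚ} (hv : v ⬝ᵥ v = 2) (x y : κ → ℚ) :
    rootReflection v x ⬝ᵥ rootReflection v y = x ⬝ᵥ y := by
  simp only [rootReflection, sub_dotProduct, dotProduct_sub, smul_dotProduct, dotProduct_smul,
    smul_eq_mul, dotProduct_comm v y, hv]
  ring

theorem rootReflection_mem_latE8 {v x : Fin 8 → ℚ} (hv : v ∈ latE8) (hx : x ∈ latE8) :
    rootReflection v x ∈ latE8 := by
  obtain ⟨m, hm⟩ := exists_dotProduct_eq_of_mem_latE8 hx hv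
  rw [rootReflection, hm, Int.cast_smul_eq_zsmul]
  exact sub_mem hx (zsmul_mem hv m)

end Reflection

/-- The roots `x` of `M` with `(x, w) ∈ 2ℤ`. For `w = 2a` these are the roots that pair integrally
with `a`. -/
def evenRoots {W : Type*} [AddCommGroup W] (C : W → W → ℚ) (M : Submodule ℤ W) (w : W) : Set W :=
  {x | x ∈ M ∧ C x x = 2 ∧ ∃ m : ℤ, C x w = 2 * m}

section E7Obstruction

variable {κ : Type*} [Fintype κ] {T : (Fin 8 → ℚ) → κ → ℤ} {w : Fin 8 → ℚ}

theorem signedPair_mem_evenRoots_latD {n : ℕ} {w : Fin n → ℤ} {i j : Fin n} (hij : i ≠ j)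
    (hw : Even (w i - w j)) (t : ℤˣ) :
    signedPair i t j ∈ evenRoots dotProduct (latD n) fun k ↦ (w k : ℚ) := by
  refine ⟨signedPair_mem_latD i t j, signedPair_norm hij t, ?_⟩
  obtain ⟨m, hm⟩ := hw
  have hm' : (w i : ℚ) - w j = m + m := by exact_mod_cast hm
  rw [signedPair_dotProduct]
  rcases Int.units_eq_one_or t with rfl | rfl
  · exact ⟨m + w j, by push_cast; linarith⟩
  · exact ⟨m, by push_cast; linarith⟩

theorem signedPair_mem_evenRoots_latE8 {w : Fin 8 → ℤ} {i j : Fin 8} (hij : i ≠ j)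
    (hw : Even (w i - w j)) (t : ℤˣ) :
    signedPair i t j ∈ evenRoots dotProduct latE8 fun k ↦ (w k : ℚ) :=
  (signedPair_mem_evenRoots_latD hij hw t).imp_left Submodule.mem_sup_left

theorem not_isIntegralIsometryOn_of_five_le_card {w : Fin 8 → ℤ} {S : Finset (Fin 8)}
    (hS : 5 ≤ S.card) (hw : ∀ i ∈ S, ∀ j ∈ S, Even (w i - w j)) {d : Fin 8 → ℚ}
    (hd : d ∈ evenRoots dotProduct latE8 fun k ↦ (w k : ℚ)) (hhalf : IsHalfOdd d) :
    ¬ IsIntegralIsometryOn dotProduct (evenRoots dotProduct latE8 fun k ↦ (w k : ℚ)) T := by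
  intro hT
  obtain ⟨g⟩ : Nonempty (Fin 5 ↪ S) := Function.Embedding.nonempty_of_card_le (by simpa using hS)
  set f : Fin 5 → Fin 8 := fun i ↦ g i
  have hf : Function.Injective f := Subtype.val_injective.comp g.injective
  have hroot (i j : Fin 5) (hij : i ≠ j) (t : ℤˣ) : signedPair (f i) t (f j) ∈ _ :=
    signedPair_mem_evenRoots_latE8 (hf.ne hij) (hw _ (g i).2 _ (g j).2) t
  refine hT.false_of_D4 (c := signedPair (f 1) (-1) (f 2))
    (a := ![signedPair (f 0) (-1) (f 1), signedPair (f 2) (-1) (f 3), signedPair (f 2) 1 (f 3)])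
    (hroot 1 2 (by decide) _) (fun i ↦ ?_) (signedPair_norm (hf.ne (by decide)) _) (fun i ↦ ?_)
    (fun i j ↦ ?_) (fun i j hij ↦ ?_)
  · fin_cases i
    exacts [hroot 0 1 (by decide) _, hroot 2 3 (by decide) _, hroot 2 3 (by decide) _]
  · fin_cases i <;> simp [signedPair, hf.eq_iff]
  · fin_cases i <;> fin_cases j <;>
      simp [signedPair, hf.eq_iff] <;> norm_num
  · by_cases hi : i = 0
    · refine ⟨signedPair (f 0) (-1) (f 4), hroot 0 4 (by decide) _, 0, ?_⟩
      subst hi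
      fin_cases j <;> simp [signedPair, hf.eq_iff] at hij ⊢
    · obtain ⟨rfl, rfl⟩ : i = 1 ∧ j = 2 := by omega
      obtain ⟨m, hm⟩ := hhalf (f 2)
      refine ⟨d, hd, m, ?_⟩
      change d ⬝ᵥ signedPair (f 2) (-1) (f 3) + d ⬝ᵥ signedPair (f 2) 1 (f 3) = 2 * m + 1
      rw [dotProduct_signedPair, dotProduct_signedPair, hm]
      push_cast
      ring

theorem exists_isHalfOdd_root {k : ℤ} (hw : ∑ l, w l = 2 * k) {i j : Fin 8} (hij : i ≠ j)
    {m : ℤ} (hm : w i + w j = 2 * m + 1) (n : ℤ) :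
    ∃ d ∈ latE8, IsHalfOdd d ∧ d ⬝ᵥ d = 2 ∧ ∃ r : ℤ, d ⬝ᵥ w = 2 * r + n := by
  have hu := one_half_mem_latE8
  have huhalf : IsHalfOdd fun _ : Fin 8 ↦ (1 / 2 : ℚ) := fun _ ↦ ⟨0, by norm_num⟩
  have huu : (fun _ : Fin 8 ↦ (1 / 2 : ℚ)) ⬝ᵥ (fun _ ↦ 1 / 2) = 2 := by
    norm_num [dotProduct]
  have huw : (fun _ ↦ (1 / 2 : ℚ)) ⬝ᵥ w = k := by
    rw [dotProduct, ← Finset.mul_sum, hw]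
    ring
  obtain ⟨r, hr⟩ | ⟨r, hr⟩ := Int.even_or_odd (k - n)
  · have hr' : (k : ℚ) - n = r + r := by exact_mod_cast hr
    exact ⟨_, hu, huhalf, huu, r, by linarith⟩
  · have hr' : (k : ℚ) - n = 2 * r + 1 := by exact_mod_cast hr
    have hpair := signedPair_mem_latD i 1 j
    refine ⟨(fun _ ↦ 1 / 2) - signedPair i 1 j, sub_mem hu (Submodule.mem_sup_left hpair), ?_, ?_,
      r - m, ?_⟩
    · rw [sub_eq_add_neg]
      exact huhalf.add_isIntVec (neg_mem hpair).1
    · simp only [sub_dotProduct, dotProduct_sub, huu, signedPair_norm hij, signedPair_dotProduct,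
        dotProduct_signedPair]
      norm_num
    · rw [sub_dotProduct, huw, signedPair_dotProduct]
      push_cast
      linarith

theorem not_isIntegralIsometryOn_zero :
    ¬ IsIntegralIsometryOn dotProduct (evenRoots dotProduct latE8 0) T := by
  intro hT
  refine not_isIntegralIsometryOn_of_five_le_card (w := 0) (S := Finset.univ)
    (d := fun _ ↦ 1 / 2) (by simp) (by simp) ⟨one_half_mem_latE8, by norm_num [dotProduct], 0, ?_⟩
    (fun _ ↦ ⟨0, by norm_num⟩) (T := T) ?_
  · simp [dotProduct]
  · simpa [Pi.zero_def] using hT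

/-- The roots in question contain a root system `E₇`, which does not embed into a cubic lattice. -/
theorem not_isIntegralIsometryOn_of_norm_modEq {w : Fin 8 → ℤ}
    (hw : (fun k ↦ (w k : ℚ)) ∈ latE8) (hnorm : w ⬝ᵥ w ≡ 2 [ZMOD 4]) :
    ¬ IsIntegralIsometryOn dotProduct (evenRoots dotProduct latE8 fun k ↦ (w k : ℚ)) T := by
  have hcard : (oddSupport w).card = 2 ∨ (oddSupport w).card = 6 := by
    have hmod := (card_oddSupport_modEq w).trans hnorm
    have hle := Finset.card_le_univ (oddSupport w)
    simp only [Int.ModEq, Fintype.card_fin] at hmod hle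
    omega
  have hcompl := Finset.card_compl (oddSupport w)
  rw [Fintype.card_fin] at hcompl
  obtain ⟨i, hi⟩ := Finset.card_pos.1 (by omega : 0 < (oddSupport w).card)
  obtain ⟨j, hj⟩ := Finset.card_pos.1 (by omega : 0 < (oddSupport w)ᶜ.card)
  have hij : i ≠ j := fun h ↦ Finset.mem_compl.1 hj (h ▸ hi)
  have hcompl_iff (l : Fin 8) : l ∈ (oddSupport w)ᶜ ↔ Even (w l) := by
    rw [Finset.mem_compl, mem_oddSupport, Int.not_odd_iff_even]
  obtain ⟨m, hm⟩ := (mem_oddSupport.1 hi).add_even ((hcompl_iff j).1 hj)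
  obtain ⟨k, hk⟩ := (mem_latE8_iff.1 hw).2
  obtain ⟨d, hd, hhalf, hdd, r, hr⟩ := exists_isHalfOdd_root hk hij (m := m)
    (by exact_mod_cast hm) 0
  have hdroot : d ∈ evenRoots dotProduct latE8 fun k ↦ (w k : ℚ) :=
    ⟨hd, hdd, r, by simpa using hr⟩
  rcases hcard with h2 | h6
  · exact not_isIntegralIsometryOn_of_five_le_card (S := (oddSupport w)ᶜ) (by omega)
      (fun i hi j hj ↦ ((hcompl_iff i).1 hi).sub ((hcompl_iff j).1 hj)) hdroot hhalf
  · exact not_isIntegralIsometryOn_of_five_le_card (S := oddSupport w) (by omega)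
      (fun i hi j hj ↦ (mem_oddSupport.1 hi).sub_odd (mem_oddSupport.1 hj)) hdroot hhalf

theorem exists_rootReflection_isIntVec (hw : w ∈ latE8) (hhalf : IsHalfOdd w) :
    ∃ v ∈ latE8, v ⬝ᵥ v = 2 ∧ IsIntVec (rootReflection v w) := by
  choose m hm using id hhalf
  obtain ⟨i, j, hij, hpar⟩ :=
    Fintype.exists_ne_map_eq_of_card_lt (fun i ↦ decide (Odd (m i))) (by simp)
  obtain ⟨r, hr⟩ : Even (m i + m j) := Int.even_add'.2 (by simpa using hpar)
  have hr' : (m i : ℚ) + m j = r + r := by exact_mod_cast hr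
  obtain ⟨k, hk⟩ := (mem_latE8_iff.1 hw).2
  obtain ⟨v, hv, hvhalf, hvv, s, hs⟩ := exists_isHalfOdd_root hk hij (m := r)
    (by rw [hm, hm]; linarith) 1
  refine ⟨v, hv, hvv, ?_⟩
  have hsplit : rootReflection v w = (w - v) + ((-2 * s : ℤ) : ℚ) • v := by
    rw [rootReflection, dotProduct_comm, hs]
    push_cast
    module
  have hdouble : IsIntVec ((2 : ℚ) • v) := two_smul ℚ v ▸ hvhalf.add hvhalf
  rw [hsplit]
  refine (hhalf.sub hvhalf).add ?_
  rw [show ((-2 * s : ℤ) : ℚ) • v = ((-s : ℤ) : ℚ) • ((2 : ℚ) • v) by push_cast; module]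
  exact hdouble.smul _

theorem mapsTo_rootReflection_evenRoots_latE8 {v : Fin 8 → ℚ} (hv : v ∈ latE8)
    (hvv : v ⬝ᵥ v = 2) (w : Fin 8 → ℚ) :
    Set.MapsTo (rootReflection v) (evenRoots dotProduct latE8 (rootReflection v w))
      (evenRoots dotProduct latE8 w) :=
  fun _ ⟨hx, hxx, n, hn⟩ ↦ ⟨rootReflection_mem_latE8 hv hx,
    by rwa [rootReflection_dotProduct_rootReflection hvv], n,
    by rwa [rootReflection_dotProduct_comm]⟩

theorem not_isIntegralIsometryOn_evenRoots_latE8 (hw : w ∈ latE8)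
    (hnorm : w = 0 ∨ ∃ r : ℤ, w ⬝ᵥ w = 4 * r + 2) :
    ¬ IsIntegralIsometryOn dotProduct (evenRoots dotProduct latE8 w) T := by
  obtain rfl | ⟨r, hr⟩ := hnorm
  · exact not_isIntegralIsometryOn_zero
  have hmod {u : Fin 8 → ℤ} (hu : (fun k ↦ (u k : ℚ)) ⬝ᵥ (fun k ↦ (u k : ℚ)) = 4 * r + 2) :
      u ⬝ᵥ u ≡ 2 [ZMOD 4] := by
    rw [← intCast_dotProduct] at hu
    have hu' : u ⬝ᵥ u = 4 * r + 2 := by exact_mod_cast hu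
    rw [hu', Int.ModEq]
    omega
  intro hT
  obtain hint | hhalf := (mem_latE8_iff.1 hw).1
  · obtain ⟨u, rfl⟩ := hint.exists_eq
    exact not_isIntegralIsometryOn_of_norm_modEq hw (hmod hr) hT
  · obtain ⟨v, hv, hvv, hint⟩ := exists_rootReflection_isIntVec hw hhalf
    have hmem := rootReflection_mem_latE8 hv hw
    have hnorm := (rootReflection_dotProduct_rootReflection hvv w w).trans hr
    have hT' := hT.comp (mapsTo_rootReflection_evenRoots_latE8 hv hvv w) fun x _ y _ ↦
      rootReflection_dotProduct_rootReflection hvv x y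
    obtain ⟨u, hu⟩ := hint.exists_eq
    rw [hu] at hmem hT' hnorm
    exact not_isIntegralIsometryOn_of_norm_modEq hmem (hmod hnorm) hT'

end E7Obstruction

/-! ### Orthogonal frames of roots -/

section Frame

theorem exists_pairing {α β : Type*} [Fintype α] [Finite β] [DecidableEq β] (f : α → β)
    (hf : ∀ b, Even (Fintype.card {a // f a = b})) {m : ℕ} (hm : Fintype.card α = m * 2) :
    ∃ e : Fin m × Fin 2 ≃ α, ∀ c s t, f (e (c, s)) = f (e (c, t)) := by
  have := Fintype.ofFinite β
  choose k hk using fun b ↦ (hf b).exists_two_nsmul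
  let g (b : β) : Fin (k b) × Fin 2 ≃ {a // f a = b} :=
    Fintype.equivOfCardEq (by simp [hk, mul_comm])
  let e₀ : (Σ b, Fin (k b)) × Fin 2 ≃ α :=
    (Equiv.sigmaProdDistrib _ _).trans ((Equiv.sigmaCongrRight g).trans (Equiv.sigmaFiberEquiv f))
  have he₀ (c : Σ b, Fin (k b)) (s : Fin 2) : f (e₀ (c, s)) = c.1 := (g c.1 (c.2, s)).2
  have hcard : Fintype.card (Fin m) = Fintype.card (Σ b, Fin (k b)) := by
    have h := Fintype.card_congr e₀
    rw [Fintype.card_prod, Fintype.card_fin, hm] at h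
    rw [Fintype.card_fin]
    omega
  let e₁ : Fin m ≃ Σ b, Fin (k b) := Fintype.equivOfCardEq hcard
  exact ⟨(e₁.prodCongr (Equiv.refl _)).trans e₀, fun c s t ↦
    (he₀ (e₁ c) s).trans (he₀ (e₁ c) t).symm⟩

theorem signedPair_dotProduct_signedPair_of_injective {ι : Type*} {n : ℕ} {e : ι × Fin 2 → Fin n}
    (he : Function.Injective e) {c d : ι} {s t : ℤˣ} (h : (c, s) ≠ (d, t)) :
    signedPair (e (c, 0)) s (e (c, 1)) ⬝ᵥ signedPair (e (d, 0)) t (e (d, 1)) = 0 := by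
  rw [signedPair_dotProduct]
  by_cases hcd : c = d
  · subst hcd
    have hst : s = -t := Int.units_ne_iff_eq_neg.1 fun hst ↦ h (hst ▸ rfl)
    have htt : ((t : ℤ) : ℚ) * (t : ℤ) = 1 := by exact_mod_cast Int.units_coe_mul_self t
    simp [signedPair, he.eq_iff, hst, htt]
  · simp [signedPair, he.eq_iff, hcd]

theorem even_card_oddSupport {κ : Type*} [Fintype κ] {w : κ → ℤ} (hw : Even (w ⬝ᵥ w)) :
    Even (oddSupport w).card := by
  classical
  rwa [← Int.not_odd_iff_even, odd_dotProduct_iff, Finset.inter_self, Nat.not_odd_iff_even] at hw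

theorem exists_signedPair_pairing {m : ℕ} {w : Fin (m * 2) → ℤ} (hw : Even (w ⬝ᵥ w)) :
    ∃ e : Fin m × Fin 2 ≃ Fin (m * 2), ∀ c, Even (w (e (c, 0)) - w (e (c, 1))) := by
  let parity (i : Fin (m * 2)) : Bool := decide (Odd (w i))
  have htrue : Even (Fintype.card {i // parity i = true}) := by
    simpa [parity, Fintype.card_subtype, oddSupport] using even_card_oddSupport hw
  have hfalse : Even (Fintype.card {i // parity i = false}) := by
    have htotal := Fintype.card_congr (Equiv.sigmaFiberEquiv parity)
    rw [Fintype.card_sigma, Fintype.sum_bool, Fintype.card_fin] at htotal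
    exact (Nat.even_add.1 (htotal.symm ▸ even_two.mul_left m)).1 htrue
  obtain ⟨e, he⟩ := exists_pairing parity (Bool.forall_bool.2 ⟨hfalse, htrue⟩) (Fintype.card_fin _)
  exact ⟨e, fun c ↦ Int.even_sub'.2 (decide_eq_decide.1 (he c 0 1))⟩

theorem exists_orthogonal_pair_evenRoots_latE8 {y : Fin 8 → ℚ} (hy : IntOrHalf y) :
    ∃ u ∈ evenRoots dotProduct latE8 y, ∃ v ∈ evenRoots dotProduct latE8 y, u ⬝ᵥ v = 0 := by
  rcases hy with hint | hhalf
  · obtain ⟨w, rfl⟩ := hint.exists_eq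
    obtain ⟨i, j, hij, hpar⟩ :=
      Fintype.exists_ne_map_eq_of_card_lt (fun i ↦ decide (Odd (w i))) (by simp)
    have hw : Even (w i - w j) := Int.even_sub'.2 (by simpa using hpar)
    refine ⟨_, signedPair_mem_evenRoots_latE8 hij hw 1,
      _, signedPair_mem_evenRoots_latE8 hij hw (-1), ?_⟩
    simp [signedPair, hij, hij.symm]
  · have hroot (i j : Fin 8) (hij : i ≠ j) :
        ∃ t : ℤˣ, signedPair i t j ∈ evenRoots dotProduct latE8 y := by
      obtain ⟨a, ha⟩ := hhalf i
      obtain ⟨b, hb⟩ := hhalf j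
      have hmem (t : ℤˣ) (m : ℤ) (h : y i + (t : ℤ) * y j = 2 * m) :
          signedPair i t j ∈ evenRoots dotProduct latE8 y :=
        ⟨Submodule.mem_sup_left (signedPair_mem_latD i t j), signedPair_norm hij t, m,
          (signedPair_dotProduct i t j y).trans h⟩
      obtain ⟨r, hr⟩ | ⟨r, hr⟩ := Int.even_or_odd (a - b)
      · have hr' : (a : ℚ) - b = r + r := by exact_mod_cast hr
        exact ⟨-1, hmem _ r (by push_cast; linarith)⟩
      · have hr' : (a : ℚ) - b = 2 * r + 1 := by exact_mod_cast hr
        exact ⟨1, hmem _ (r + b + 1) (by push_cast; linarith)⟩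
    obtain ⟨s, hs⟩ := hroot 0 1 (by decide)
    obtain ⟨t, ht⟩ := hroot 2 3 (by decide)
    exact ⟨_, hs, _, ht, by simp [signedPair]⟩

variable {x : Fin 16 → ℚ} {y : Fin 8 → ℚ}

theorem exists_orthogonal_frame_evenRoots (hx : IsIntVec x) (hxx : ∃ m : ℤ, x ⬝ᵥ x = 2 * m)
    (hy : IntOrHalf y) :
    ∃ v : Fin 8 × ℤˣ ⊕ Fin 2 → (Fin 16 → ℚ) × (Fin 8 → ℚ),
      (∀ i, v i ∈ evenRoots (prodForm dotProduct dotProduct) ((latD 16).prod latE8) (x, y)) ∧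
      Pairwise fun i j ↦ prodForm dotProduct dotProduct (v i) (v j) = 0 := by
  obtain ⟨w, rfl⟩ := hx.exists_eq
  have hww : Even (w ⬝ᵥ w) := by
    obtain ⟨m, hm⟩ := hxx
    rw [← intCast_dotProduct] at hm
    exact even_iff_two_dvd.2 ⟨m, by exact_mod_cast hm⟩
  obtain ⟨e, he⟩ := exists_signedPair_pairing (m := 8) hww
  obtain ⟨u, hu, v, hv, huv⟩ := exists_orthogonal_pair_evenRoots_latE8 hy
  refine ⟨Sum.elim (fun c ↦ (signedPair (e (c.1, 0)) c.2 (e (c.1, 1)), 0)) fun i ↦ (0, ![u, v] i),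
    ?_, ?_⟩
  · rintro (⟨c, t⟩ | i)
    · obtain ⟨hmem, hnorm, m, hm⟩ := signedPair_mem_evenRoots_latD (e.injective.ne (by simp))
        (he c) t
      exact ⟨⟨hmem, zero_mem _⟩, by simpa [prodForm] using hnorm, m, by simpa [prodForm] using hm⟩
    · obtain ⟨hmem, hnorm, m, hm⟩ : ![u, v] i ∈ evenRoots dotProduct latE8 y := by
        fin_cases i <;> assumption
      exact ⟨⟨zero_mem _, hmem⟩, by simpa [prodForm] using hnorm, m, by simpa [prodForm] using hm⟩
  · rintro (⟨c, s⟩ | i) (⟨d, t⟩ | j) h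
    · simpa [prodForm] using
        signedPair_dotProduct_signedPair_of_injective e.injective (by simpa using h)
    · simp [prodForm]
    · simp [prodForm]
    · fin_cases i <;> fin_cases j <;> simp_all [prodForm, dotProduct_comm]

theorem not_isIntegralIsometryOn_of_isIntVec {α β : Type*} [Fintype α] [Fintype β]
    {T : (Fin 16 → ℚ) × (Fin 8 → ℚ) → α ⊕ β → ℤ}
    (hcard : Fintype.card α + 2 * Fintype.card β < 36) (hx : IsIntVec x)
    (hxx : ∃ m : ℤ, x ⬝ᵥ x = 2 * m) (hy : IntOrHalf y)
    (hsum : ∀ r ∈ evenRoots (prodForm dotProduct dotProduct) ((latD 16).prod latE8) (x, y),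
      ∑ k, T r (.inl k) = 0) :
    ¬ IsIntegralIsometryOn (prodForm dotProduct dotProduct)
      (evenRoots (prodForm dotProduct dotProduct) ((latD 16).prod latE8) (x, y)) T := by
  intro hT
  obtain ⟨v, hv, hort⟩ := exists_orthogonal_frame_evenRoots hx hxx hy
  have hbound := two_mul_card_le_of_orthogonal (v := T ∘ v)
    (fun i ↦ hT.dotProduct_eq (hv i) (hv i) (by simpa using (hv i).2.1))
    (fun i j hij ↦ hT.dotProduct_eq (hv i) (hv j) (by simpa using hort hij))
    fun i ↦ hsum _ (hv i)
  simp only [Fintype.card_sum, Fintype.card_prod, Fintype.card_fin, Fintype.card_units_int]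
    at hbound
  omega

end Frame

section HalfIntegralPart

variable {α β : Type*} [Fintype α] [Fintype β]
  {T : (Fin 16 → ℚ) × (Fin 8 → ℚ) → α ⊕ β → ℤ} {x : Fin 16 → ℚ} {y : Fin 8 → ℚ}

theorem not_isIntegralIsometryOn_evenRoots_prod (hy : y ∈ latE8)
    (hnorm : y = 0 ∨ ∃ r : ℤ, y ⬝ᵥ y = 4 * r + 2) :
    ¬ IsIntegralIsometryOn (prodForm dotProduct dotProduct)
      (evenRoots (prodForm dotProduct dotProduct) ((latD 16).prod latE8) (x, y)) T := by
  intro hT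
  refine not_isIntegralIsometryOn_evenRoots_latE8 hy hnorm (hT.comp (φ := fun v ↦ (0, v)) ?_ ?_)
  · rintro v ⟨hv, hvv, m, hm⟩
    exact ⟨⟨zero_mem _, hv⟩, by simpa [prodForm] using hvv, m, by simpa [prodForm] using hm⟩
  · simp [prodForm]

theorem isHalfOdd_and_norm_of_isIntegralIsometryOn
    (hcard : Fintype.card α + 2 * Fintype.card β < 36) (hx : IntOrHalf x) (hy : y ∈ latE8)
    (hnorm : x ⬝ᵥ x + y ⬝ᵥ y = 12)
    (hsum : ∀ r ∈ evenRoots (prodForm dotProduct dotProduct) ((latD 16).prod latE8) (x, y),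
      ∑ k, T r (.inl k) = 0)
    (hT : IsIntegralIsometryOn (prodForm dotProduct dotProduct)
      (evenRoots (prodForm dotProduct dotProduct) ((latD 16).prod latE8) (x, y)) T) :
    IsHalfOdd x ∧ (x ⬝ᵥ x = 4 ∧ y ⬝ᵥ y = 8 ∨ x ⬝ᵥ x = 8 ∧ y ⬝ᵥ y = 4) := by
  obtain ⟨m, hm⟩ := exists_dotProduct_self_eq_of_mem_latE8 hy
  have hhalf : IsHalfOdd x := hx.resolve_left fun hint ↦
    not_isIntegralIsometryOn_of_isIntVec hcard hint ⟨6 - m, by push_cast; linarith⟩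
      (mem_latE8_iff.1 hy).1 hsum hT
  have hm0 : m ≠ 0 := by
    rintro rfl
    exact not_isIntegralIsometryOn_evenRoots_prod hy
      (.inl (dotProduct_self_eq_zero.1 (by simpa using hm))) hT
  have hmeven : ¬ Odd m := by
    rintro ⟨r, rfl⟩
    exact not_isIntegralIsometryOn_evenRoots_prod hy
      (.inr ⟨r, by rw [hm]; push_cast; ring⟩) hT
  have hm_nonneg : 0 ≤ m := by
    have h : (0 : ℚ) ≤ 2 * m := hm ▸ dotProduct_self_nonneg y
    exact_mod_cast (by linarith : (0 : ℚ) ≤ m)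
  have hm_le : m ≤ 4 := by
    have h := hhalf.div_four_le_norm
    push_cast at h
    exact_mod_cast (by linarith : (m : ℚ) ≤ 4)
  obtain rfl | rfl : m = 2 ∨ m = 4 := by
    rw [Int.odd_iff] at hmeven
    omega
  · exact ⟨hhalf, .inr ⟨by push_cast at hm; linarith, by push_cast at hm; linarith⟩⟩
  · exact ⟨hhalf, .inl ⟨by push_cast at hm; linarith, by push_cast at hm; linarith⟩⟩

end HalfIntegralPart

/-! ### Configurations of five arms -/

section NormIdentities

variable {κ : Type*} [Fintype κ]

theorem add_dotProduct_self (x y : κ → ℚ) :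
    (x + y) ⬝ᵥ (x + y) = x ⬝ᵥ x + y ⬝ᵥ y + 2 * (x ⬝ᵥ y) := by
  rw [add_dotProduct, dotProduct_add, dotProduct_add, dotProduct_comm y x]
  ring

theorem sub_dotProduct_self (x y : κ → ℚ) :
    (x - y) ⬝ᵥ (x - y) = x ⬝ᵥ x + y ⬝ᵥ y - 2 * (x ⬝ᵥ y) := by
  rw [sub_dotProduct, dotProduct_sub, dotProduct_sub, dotProduct_comm y x]
  ring

theorem sum_dotProduct_sum_le {v : Fin 3 → κ → ℚ} {a b : ℚ} (ha : ∀ i, v i ⬝ᵥ v i = a)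
    (hb : ∀ i j, i ≠ j → v i ⬝ᵥ v j ≤ b) : (∑ i, v i) ⬝ᵥ ∑ i, v i ≤ 3 * a + 6 * b := by
  simp only [Fin.sum_univ_three, add_dotProduct, dotProduct_add, ha]
  linarith [hb 0 1 (by decide), hb 0 2 (by decide), hb 1 0 (by decide), hb 1 2 (by decide),
    hb 2 0 (by decide), hb 2 1 (by decide)]

theorem sum_eq_zero_of_dotProduct_eq {v : Fin 3 → κ → ℚ} (ha : ∀ i, v i ⬝ᵥ v i = 2)
    (hb : ∀ i j, i ≠ j → v i ⬝ᵥ v j = -1) : ∑ i, v i = 0 :=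
  dotProduct_self_eq_zero.1 (le_antisymm
    ((sum_dotProduct_sum_le ha fun i j hij ↦ (hb i j hij).le).trans (by norm_num))
    (dotProduct_self_nonneg _))

end NormIdentities

theorem exists_embedding_fin_three {ι : Type*} [Fintype ι] (hι : 5 ≤ Fintype.card ι)
    (c : ι → Prop) : ∃ f : Fin 3 ↪ ι, ∀ i j, c (f i) ↔ c (f j) := by
  classical
  obtain ⟨b, hb⟩ := Fintype.exists_lt_card_fiber_of_mul_lt_card (fun i ↦ decide (c i)) (n := 2)
    (by rw [Fintype.card_bool]; omega)
  obtain ⟨f⟩ : Nonempty (Fin 3 ↪ ({i | decide (c i) = b} : Finset ι)) :=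
    Function.Embedding.nonempty_of_card_le (by
      rw [Fintype.card_fin, Fintype.card_coe]
      exact hb)
  have hf (i : Fin 3) : decide (c (f i)) = b := (Finset.mem_filter.1 (f i).2).2
  exact ⟨f.trans (.subtype _), fun i j ↦ decide_eq_decide.1 ((hf i).trans (hf j).symm)⟩

section QuarterOdd

variable {n : ℕ} {x y : Fin n → ℚ}

theorem isHalfOdd_add_of_isIntVec_sub (hy : IsHalfOdd ((2 : ℚ) • y)) (hxy : IsIntVec (x - y)) :
    IsHalfOdd (x + y) := by
  rw [show x + y = (2 : ℚ) • y + (x - y) by module]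
  exact hy.add_isIntVec hxy

theorem isIntVec_add_of_isHalfOdd_sub (hy : IsHalfOdd ((2 : ℚ) • y)) (hxy : IsHalfOdd (x - y)) :
    IsIntVec (x + y) := by
  rw [show x + y = (2 : ℚ) • y + (x - y) by module]
  exact hy.add hxy

theorem eq_of_isIntVec_sub {x y : Fin 16 → ℚ} (hy : IsHalfOdd ((2 : ℚ) • y))
    (hxy : IsIntVec (x - y)) (hxx : x ⬝ᵥ x = 1) (hyy : y ⬝ᵥ y = 1) : x = y := by
  have hle := (isHalfOdd_add_of_isIntVec_sub hy hxy).div_four_le_norm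
  push_cast at hle
  refine sub_eq_zero.1 (dotProduct_self_eq_zero.1 (le_antisymm ?_ (dotProduct_self_nonneg _)))
  linarith [add_dotProduct_self x y, sub_dotProduct_self x y]

theorem eq_neg_of_isHalfOdd_sub {x y : Fin 16 → ℚ} (hxy : IsHalfOdd (x - y)) (hxx : x ⬝ᵥ x = 1)
    (hyy : y ⬝ᵥ y = 1) : x = -y := by
  have hle := hxy.div_four_le_norm
  push_cast at hle
  refine eq_neg_of_add_eq_zero_left
    (dotProduct_self_eq_zero.1 (le_antisymm ?_ (dotProduct_self_nonneg _)))
  linarith [add_dotProduct_self x y, sub_dotProduct_self x y]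

theorem eq_or_eq_neg_of_intOrHalf_sub {x y : Fin 16 → ℚ} (hy : IsHalfOdd ((2 : ℚ) • y))
    (hxy : IntOrHalf (x - y)) (hxx : x ⬝ᵥ x = 1) (hyy : y ⬝ᵥ y = 1) : x = y ∨ x = -y :=
  hxy.imp (eq_of_isIntVec_sub hy · hxx hyy) (eq_neg_of_isHalfOdd_sub · hxx hyy)

end QuarterOdd

/-- The components `p i` and `q i` in `ℚ¹⁶` and `ℚ⁸` of pairwise orthogonal vectors of norm `3` that
satisfy the constraints imposed on the arms of a copy of `L⁺`: the coordinates of `p i` are odd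
multiples of `1/4`, its norm is `1` or `2`, and differences of arms lie in an even lattice
containing `D₁₆ ⊕ E₈`. -/
structure IsArmConfiguration {ι : Type*} (p : ι → Fin 16 → ℚ) (q : ι → Fin 8 → ℚ) : Prop where
  isHalfOdd (i : ι) : IsHalfOdd ((2 : ℚ) • p i)
  norm_fst (i : ι) : p i ⬝ᵥ p i = 1 ∨ p i ⬝ᵥ p i = 2
  norm_add (i : ι) : p i ⬝ᵥ p i + q i ⬝ᵥ q i = 3
  intOrHalf_sub (i j : ι) : IntOrHalf (p i - p j)
  sub_mem (i j : ι) : q i - q j ∈ latE8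
  orthogonal {i j : ι} : i ≠ j → p i ⬝ᵥ p j + q i ⬝ᵥ q j = 0

namespace IsArmConfiguration

variable {ι : Type*} {p : ι → Fin 16 → ℚ} {q : ι → Fin 8 → ℚ} {i j k : ι}

theorem eq_or_eq_neg (hA : IsArmConfiguration p q) (hi : p i ⬝ᵥ p i = 1) (hj : p j ⬝ᵥ p j = 1) :
    p i = p j ∨ p i = -p j :=
  eq_or_eq_neg_of_intOrHalf_sub (hA.isHalfOdd j) (hA.intOrHalf_sub i j) hi hj

theorem exists_isIntVec_sub [Fintype ι] (hA : IsArmConfiguration p q) (hι : 5 ≤ Fintype.card ι) :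
    ∃ f : Fin 3 ↪ ι, ∀ s t, IsIntVec (p (f s) - p (f t)) := by
  obtain ⟨i₀⟩ : Nonempty ι := Fintype.card_pos_iff.1 (by omega)
  obtain ⟨f, hf⟩ := exists_embedding_fin_three hι fun i ↦ IsHalfOdd (p i - p i₀)
  refine ⟨f, fun s t ↦ ?_⟩
  rw [show p (f s) - p (f t) = (p (f s) - p i₀) - (p (f t) - p i₀) by abel]
  by_cases hhalf : IsHalfOdd (p (f s) - p i₀)
  · exact hhalf.sub ((hf s t).1 hhalf)
  · exact IsIntVec.sub ((hA.intOrHalf_sub _ _).resolve_right hhalf)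
      ((hA.intOrHalf_sub _ _).resolve_right fun h ↦ hhalf ((hf s t).2 h))

section RootInD16

variable {h : Fin 16 → ℚ}

theorem norm_fst_eq_two (hA : IsArmConfiguration p q) (hint : IsIntVec h) (hh : h ⬝ᵥ h = 2)
    (hp : h ⬝ᵥ p i = 1) : p i ⬝ᵥ p i = 2 := by
  refine (hA.norm_fst i).resolve_left fun hi ↦ ?_
  have hnorm : (p i - h) ⬝ᵥ (p i - h) = 1 := by
    rw [sub_dotProduct_self, hi, hh, dotProduct_comm, hp]
    norm_num
  have hdiff : IntOrHalf (p i - h - p i) := .inl (by simpa using hint.neg)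
  obtain heq | heq := eq_or_eq_neg_of_intOrHalf_sub (hA.isHalfOdd i) hdiff hnorm hi
  · rw [sub_eq_self.1 heq, zero_dotProduct] at hp
    norm_num at hp
  · have hdot := congrArg (· ⬝ᵥ p i) heq
    simp only [sub_dotProduct, neg_dotProduct, hi, hp] at hdot
    norm_num at hdot

/-- Reflecting the half-odd vector `pᵢ + pⱼ` in `h` lowers its norm by `2`, and a half-odd vector
has norm at least `4`. -/
theorem one_le_dotProduct (hA : IsArmConfiguration p q) (hint : IsIntVec h) (hh : h ⬝ᵥ h = 2)
    (hp : ∀ i, h ⬝ᵥ p i = 1) (hij : IsIntVec (p i - p j)) : 1 ≤ p i ⬝ᵥ p j := by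
  have hle := ((isHalfOdd_add_of_isIntVec_sub (hA.isHalfOdd j) hij).sub_isIntVec
    hint).div_four_le_norm
  rw [sub_dotProduct_self, add_dotProduct_self, hA.norm_fst_eq_two hint hh (hp i),
    hA.norm_fst_eq_two hint hh (hp j), hh, dotProduct_comm _ h, dotProduct_add, hp, hp] at hle
  push_cast at hle
  linarith

theorem false_of_root_latD [Fintype ι] (hA : IsArmConfiguration p q) (hι : 5 ≤ Fintype.card ι)
    (hint : IsIntVec h) (hh : h ⬝ᵥ h = 2) (hp : ∀ i, h ⬝ᵥ p i = 1) : False := by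
  obtain ⟨f, hf⟩ := hA.exists_isIntVec_sub hι
  have hnorm (s : Fin 3) : q (f s) ⬝ᵥ q (f s) = 1 := by
    linarith [hA.norm_add (f s), hA.norm_fst_eq_two hint hh (hp (f s))]
  have hdot (s t : Fin 3) (hst : s ≠ t) : q (f s) ⬝ᵥ q (f t) ≤ -1 := by
    linarith [hA.one_le_dotProduct hint hh hp (hf s t), hA.orthogonal (f.injective.ne hst)]
  linarith [sum_dotProduct_sum_le hnorm hdot, dotProduct_self_nonneg (∑ s, q (f s))]

end RootInD16

section RootInE8

variable {h : Fin 8 → ℚ}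

theorem not_forall_fst_eq (hA : IsArmConfiguration p q) (hq : ∀ i, h ⬝ᵥ q i = 1) {f : Fin 3 ↪ ι}
    (hf : ∀ s, p (f s) ⬝ᵥ p (f s) = 1) : ¬ ∀ s t, p (f s) = p (f t) := by
  intro heq
  have hsum : ∑ s, q (f s) = 0 := by
    refine sum_eq_zero_of_dotProduct_eq (fun s ↦ ?_) fun s t hst ↦ ?_
    · linarith [hA.norm_add (f s), hf s]
    · have hort := hA.orthogonal (f.injective.ne hst)
      rw [heq t s, hf] at hort
      linarith
  have hdot : h ⬝ᵥ ∑ s, q (f s) = 3 := by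
    simp only [dotProduct_sum, hq]
    norm_num
  rw [hsum, dotProduct_zero] at hdot
  norm_num at hdot

theorem not_forall_snd_eq (hA : IsArmConfiguration p q) {f : Fin 3 ↪ ι}
    (hf : ∀ s, p (f s) ⬝ᵥ p (f s) = 2) : ¬ ∀ s t, q (f s) = q (f t) := by
  intro heq
  have hsum : ∑ s, p (f s) = 0 := by
    refine sum_eq_zero_of_dotProduct_eq hf fun s t hst ↦ ?_
    have hort := hA.orthogonal (f.injective.ne hst)
    rw [heq t s] at hort
    linarith [hA.norm_add (f s), hf s]
  have hhalf := (hA.isHalfOdd (f 2)).add_isIntVec ((hA.isHalfOdd (f 0)).add (hA.isHalfOdd (f 1)))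
  have hzero : (2 : ℚ) • p (f 2) + ((2 : ℚ) • p (f 0) + (2 : ℚ) • p (f 1)) = 0 := by
    rw [Fin.sum_univ_three] at hsum
    rw [← smul_add, ← smul_add, add_comm, hsum, smul_zero]
  rw [hzero] at hhalf
  obtain ⟨m, hm⟩ := hhalf 0
  exact intCast_ne_add_half 0 m (by simpa using hm)

theorem snd_eq_or_eq_sub (hA : IsArmConfiguration p q) (hh : h ⬝ᵥ h = 2) (hq : ∀ i, h ⬝ᵥ q i = 1)
    (hi : p i ⬝ᵥ p i = 2) (hj : p j ⬝ᵥ p j = 2) : q i = q j ∨ q i = h - q j := by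
  obtain ⟨m, hm⟩ := exists_dotProduct_self_eq_of_mem_latE8 (hA.sub_mem i j)
  have hsub := sub_dotProduct_self (q i) (q j)
  have hadd := add_dotProduct_self (q i) (q j)
  have hrefl := sub_dotProduct_self (q i + q j) h
  rw [dotProduct_comm (q i + q j) h, dotProduct_add h, hq, hq, hh] at hrefl
  have hcompl : (q i + q j - h) ⬝ᵥ (q i + q j - h) = 2 - 2 * m := by
    linarith [hA.norm_add i, hA.norm_add j]
  have hm_nonneg : 0 ≤ m := by
    have h0 := dotProduct_self_nonneg (q i - q j)
    exact_mod_cast (by linarith : (0 : ℚ) ≤ m)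
  have hm_le : m ≤ 1 := by
    have h0 := dotProduct_self_nonneg (q i + q j - h)
    exact_mod_cast (by linarith : (m : ℚ) ≤ 1)
  obtain rfl | rfl : m = 0 ∨ m = 1 := by omega
  · exact .inl (sub_eq_zero.1 (dotProduct_self_eq_zero.1 (by simpa using hm)))
  · exact .inr (eq_sub_of_add_eq
      (sub_eq_zero.1 (dotProduct_self_eq_zero.1 (by simpa using hcompl))))

theorem dotProduct_eq_neg_half (hA : IsArmConfiguration p q) (hh : h ⬝ᵥ h = 2)
    (hq : ∀ i, h ⬝ᵥ q i = 1) (hi : p i ⬝ᵥ p i = 1) (hj : p j ⬝ᵥ p j = 2) :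
    p i ⬝ᵥ p j = -1 / 2 := by
  have hij : i ≠ j := by
    rintro rfl
    linarith
  have hqi : q i ⬝ᵥ q i = 2 := by linarith [hA.norm_add i]
  have hqj : q j ⬝ᵥ q j = 1 := by linarith [hA.norm_add j]
  obtain ⟨m, hm⟩ := exists_dotProduct_self_eq_of_mem_latE8 (hA.sub_mem i j)
  have hsub := sub_dotProduct_self (q i) (q j)
  have hqj' : (h - q j) ⬝ᵥ (h - q j) = 1 := by
    rw [sub_dotProduct_self, hh, hqj, hq]
    norm_num
  have hrefl := sub_dotProduct_self (q i) (h - q j)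
  rw [dotProduct_sub (q i), dotProduct_comm _ h, hq, hqi, hqj'] at hrefl
  have hne : ∀ v : Fin 8 → ℚ, v ⬝ᵥ v = 1 → 0 < (q i - v) ⬝ᵥ (q i - v) := by
    refine fun v hv ↦ (dotProduct_self_nonneg _).lt_of_ne fun h0 ↦ ?_
    rw [sub_eq_zero.1 (dotProduct_self_eq_zero.1 h0.symm), hv] at hqi
    norm_num at hqi
  have hm_pos : 0 < m := by
    have h0 := hne _ hqj
    exact_mod_cast (by linarith : (0 : ℚ) < m)
  have hm_lt : m < 2 := by
    have h0 := hne _ hqj'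
    exact_mod_cast (by linarith : (m : ℚ) < 2)
  obtain rfl : m = 1 := by omega
  push_cast at hm
  linarith [hA.orthogonal hij]

/-- `pᵢ + pⱼ + pₖ` would be a second quarter-odd vector of norm `1`, orthogonal to `pᵢ`. -/
theorem snd_ne (hA : IsArmConfiguration p q) (hh : h ⬝ᵥ h = 2) (hq : ∀ i, h ⬝ᵥ q i = 1)
    (hi : p i ⬝ᵥ p i = 1) (hj : p j ⬝ᵥ p j = 2) (hk : p k ⬝ᵥ p k = 2) (hjk : j ≠ k) :
    q j ≠ q k := by
  intro heq
  have hpij := hA.dotProduct_eq_neg_half hh hq hi hj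
  have hpik := hA.dotProduct_eq_neg_half hh hq hi hk
  have hpjk : p j ⬝ᵥ p k = -1 := by
    have hort := hA.orthogonal hjk
    rw [← heq] at hort
    linarith [hA.norm_add j]
  set x := p j + p k + p i
  have hxi : x ⬝ᵥ p i = 0 := by
    rw [add_dotProduct, add_dotProduct, dotProduct_comm, dotProduct_comm (p k), hpij, hpik, hi]
    norm_num
  have hxx : x ⬝ᵥ x = 1 := by
    rw [add_dotProduct_self, add_dotProduct_self, add_dotProduct, dotProduct_comm (p j) (p i),
      dotProduct_comm (p k) (p i), hpij, hpik, hpjk, hi, hj, hk]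
    norm_num
  have hdiff : IntOrHalf (x - p i) := by
    rw [add_sub_cancel_right]
    exact (hA.intOrHalf_sub j k).symm.imp (isIntVec_add_of_isHalfOdd_sub (hA.isHalfOdd k))
      (isHalfOdd_add_of_isIntVec_sub (hA.isHalfOdd k))
  obtain hx | hx := eq_or_eq_neg_of_intOrHalf_sub (hA.isHalfOdd i) hdiff hxx hi
  · rw [hx, hi] at hxi
    norm_num at hxi
  · rw [hx, neg_dotProduct, hi] at hxi
    norm_num at hxi

theorem not_forall_norm_fst_eq_one [Fintype ι] (hA : IsArmConfiguration p q)
    (hι : 5 ≤ Fintype.card ι) (hq : ∀ i, h ⬝ᵥ q i = 1) : ¬ ∀ i, p i ⬝ᵥ p i = 1 := by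
  intro hnorm
  obtain ⟨f, hf⟩ := hA.exists_isIntVec_sub hι
  exact hA.not_forall_fst_eq hq (fun s ↦ hnorm (f s)) fun s t ↦
    eq_of_isIntVec_sub (hA.isHalfOdd _) (hf s t) (hnorm _) (hnorm _)

theorem not_forall_norm_fst_eq_two [Fintype ι] (hA : IsArmConfiguration p q)
    (hι : 5 ≤ Fintype.card ι) (hh : h ⬝ᵥ h = 2) (hq : ∀ i, h ⬝ᵥ q i = 1) :
    ¬ ∀ i, p i ⬝ᵥ p i = 2 := by
  intro hnorm
  obtain ⟨i₀⟩ : Nonempty ι := Fintype.card_pos_iff.1 (by omega)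
  obtain ⟨f, hf⟩ := exists_embedding_fin_three hι fun i ↦ q i = q i₀
  refine hA.not_forall_snd_eq (fun s ↦ hnorm (f s)) fun s t ↦ ?_
  have hcase (s : Fin 3) := hA.snd_eq_or_eq_sub hh hq (hnorm (f s)) (hnorm i₀)
  by_cases hs : q (f s) = q i₀
  · rw [hs, (hf s t).1 hs]
  · rw [(hcase s).resolve_left hs, (hcase t).resolve_left fun ht ↦ hs ((hf s t).2 ht)]

theorem norm_fst_ne_two (hA : IsArmConfiguration p q) (hh : h ⬝ᵥ h = 2) (hq : ∀ i, h ⬝ᵥ q i = 1)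
    {f : Fin 3 ↪ ι} (hf : ∀ s, p (f s) ⬝ᵥ p (f s) = 1) : p i ⬝ᵥ p i ≠ 2 := by
  intro hi
  have hdot (s : Fin 3) := hA.dotProduct_eq_neg_half hh hq (hf s) hi
  refine hA.not_forall_fst_eq hq hf fun s t ↦ ?_
  refine (hA.eq_or_eq_neg (hf s) (hf t)).resolve_right fun hneg ↦ ?_
  have hs := hdot s
  rw [hneg, neg_dotProduct, hdot t] at hs
  norm_num at hs

theorem norm_fst_ne_one (hA : IsArmConfiguration p q) (hh : h ⬝ᵥ h = 2) (hq : ∀ i, h ⬝ᵥ q i = 1)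
    {f : Fin 3 ↪ ι} (hf : ∀ s, p (f s) ⬝ᵥ p (f s) = 2) : p i ⬝ᵥ p i ≠ 1 := by
  intro hi
  have hne (s t : Fin 3) (hst : s ≠ t) : q (f s) ≠ q (f t) :=
    hA.snd_ne hh hq hi (hf s) (hf t) (f.injective.ne hst)
  have hcompl (s t : Fin 3) (hst : s ≠ t) : q (f s) = h - q (f t) :=
    (hA.snd_eq_or_eq_sub hh hq (hf s) (hf t)).resolve_left (hne s t hst)
  exact hne 0 1 (by decide) ((hcompl 0 2 (by decide)).trans (hcompl 1 2 (by decide)).symm)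

theorem false_of_root_latE8 [Fintype ι] (hA : IsArmConfiguration p q) (hι : 5 ≤ Fintype.card ι)
    (hh : h ⬝ᵥ h = 2) (hq : ∀ i, h ⬝ᵥ q i = 1) : False := by
  obtain ⟨f, hf⟩ := exists_embedding_fin_three hι fun i ↦ p i ⬝ᵥ p i = 1
  by_cases h0 : p (f 0) ⬝ᵥ p (f 0) = 1
  · have hone (s : Fin 3) : p (f s) ⬝ᵥ p (f s) = 1 := (hf 0 s).1 h0
    exact hA.not_forall_norm_fst_eq_one hι hq fun i ↦
      (hA.norm_fst i).resolve_right (hA.norm_fst_ne_two hh hq hone)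
  · have htwo (s : Fin 3) : p (f s) ⬝ᵥ p (f s) = 2 :=
      (hA.norm_fst (f s)).resolve_left fun h1 ↦ h0 ((hf 0 s).2 h1)
    exact hA.not_forall_norm_fst_eq_two hι hh hq fun i ↦
      (hA.norm_fst i).resolve_left (hA.norm_fst_ne_one hh hq htwo)

end RootInE8

end IsArmConfiguration

/-! ### Even neighbors -/

section Neighbors

variable {B : V →ₗ[ℚ] V →ₗ[ℚ] ℚ} {N E : Submodule ℤ V}

theorem IsEvenNeighbor.mem_of_even_norm (hE : IsEvenNeighbor B N E)
    (hB : ∀ x y, B x y = B y x) (hN : N ≤ dualLattice B N) (hodd : IsOddLat B N) {x : V}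
    (hx : x ∈ N) {n : ℤ} (hxx : B x x = 2 * n) : x ∈ E := by
  obtain ⟨v, hv, k, hvv⟩ := hodd
  obtain ⟨-, -, heven, ⟨-, a, -, -, ha⟩, -⟩ := hE
  have hvE : v ∉ E := fun hvE ↦ by
    obtain ⟨l, hl⟩ := heven v hvE
    have : 2 * k + 1 = 2 * l := by exact_mod_cast hvv.symm.trans hl
    omega
  have hva : v - a ∈ E := ((ha v hv).resolve_left fun h ↦ hvE h.2).2
  refine (ha x hx).elim And.right fun hxa ↦ ?_
  obtain ⟨l, hl⟩ := heven (x - v) (by simpa using sub_mem hxa.2 hva)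
  obtain ⟨m, hm⟩ := hN hx v hv
  rw [map_sub, map_sub, LinearMap.sub_apply, LinearMap.sub_apply, hxx, hB v x, hm, hvv] at hl
  have : 2 * n - m - (m - (2 * k + 1)) = 2 * l := by exact_mod_cast hl
  omega

theorem IsEvenNeighbor.mem_of_pairing_odd (hE : IsEvenNeighbor B N E)
    (hB : ∀ x y, B x y = B y x) (hN : IsUnimodular B N) {a r : V} (ha : a ∈ N) {k m : ℤ}
    (haa : B a a = 2 * k + 1) (hr : r ∈ E) (hra : B r a = m) : r ∈ N := by
  have hmem {x : V} {n : ℤ} (hx : x ∈ N) (hxx : B x x = 2 * n) : x ∈ E :=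
    hE.mem_of_even_norm hB hN.le ⟨a, ha, k, haa⟩ hx hxx
  rw [hN]
  intro y hy
  obtain ⟨n, hyy⟩ := hN.le hy y hy
  obtain ⟨l, rfl⟩ | ⟨l, rfl⟩ := Int.even_or_odd n
  · exact hE.1.integral hr y (hmem (n := l) hy (by rw [hyy]; push_cast; ring))
  · obtain ⟨t, ht⟩ := hN.le hy a ha
    obtain ⟨s, hs⟩ := hE.1.integral hr (y - a) <| hmem (n := l - t + k + 1) (sub_mem hy ha) <| by
      rw [map_sub, map_sub, LinearMap.sub_apply, LinearMap.sub_apply, hyy, hB a y, ht, haa]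
      push_cast
      ring
    refine ⟨s + m, ?_⟩
    rw [map_sub, hra] at hs
    push_cast
    linarith

theorem rootSublattice_le (B : V →ₗ[ℚ] V →ₗ[ℚ] ℚ) (E : Submodule ℤ V) : rootSublattice B E ≤ E :=
  Submodule.span_le.2 fun _ hv ↦ hv.1

end Neighbors

section Isometries

theorem LatticeIsometric.exists_linearEquiv [FiniteDimensional ℚ V] [FiniteDimensional ℚ W]
    {B : V →ₗ[ℚ] V →ₗ[ℚ] ℚ} {C : W →ₗ[ℚ] W →ₗ[ℚ] ℚ} {L : Submodule ℤ V} {M : Submodule ℤ W}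
    (h : LatticeIsometric (fun x y ↦ B x y) (fun x y ↦ C x y) L M) (hB : ∀ x ≠ 0, 0 < B x x)
    (hC : ∀ x ≠ 0, 0 < C x x) (hM : Submodule.span ℚ (M : Set W) = ⊤)
    (hdim : Module.finrank ℚ W = Module.finrank ℚ V) :
    ∃ φ : V ≃ₗ[ℚ] W, (∀ x y, C (φ x) (φ y) = B x y) ∧ ∀ m ∈ M, φ.symm m ∈ L := by
  obtain ⟨f, hf⟩ := h
  let b := Module.Basis.ofSpan hM.ge
  have hbM (i) : b i ∈ M := Module.Basis.ofSpan_subset hM.ge ⟨i, rfl⟩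
  let g : W →ₗ[ℚ] V := b.constr ℚ fun i ↦ (f.symm ⟨b i, hbM i⟩ : V)
  have hfB (x y : M) : B (f.symm x) (f.symm y) = C x y := by
    simpa using (hf (f.symm x) (f.symm y)).symm
  have hgb (i) : g (b i) = f.symm ⟨b i, hbM i⟩ := b.constr_basis ℚ _ i
  have hg (x y : W) : B (g x) (g y) = C x y := by
    have hext : B.compl₁₂ g g = C := LinearMap.ext_basis b b fun i j ↦ by
      rw [LinearMap.compl₁₂_apply, hgb, hgb, hfB]
    rw [← hext, LinearMap.compl₁₂_apply]
  have hinj : Function.Injective g := (injective_iff_map_eq_zero g).2 fun x hx ↦ by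
    by_contra hx0
    exact (hC x hx0).ne' (by rw [← hg, hx, map_zero])
  let e := LinearEquiv.ofInjectiveOfFinrankEq g hinj hdim
  refine ⟨e.symm, fun x y ↦ ?_, fun m hm ↦ ?_⟩
  · rw [← hg]
    exact congrArg₂ (B · ·) (e.apply_symm_apply x) (e.apply_symm_apply y)
  have hort : B (g m - f.symm ⟨m, hm⟩) = 0 := by
    refine (b.map e).ext fun i ↦ ?_
    have hei : b.map e i = f.symm ⟨b i, hbM i⟩ := hgb i
    rw [hei, map_sub, LinearMap.sub_apply, hfB, ← hgb, hg, sub_self, LinearMap.zero_apply]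
  have hgm : g m = f.symm ⟨m, hm⟩ := by
    by_contra hne
    exact (hB _ (sub_ne_zero.2 hne)).ne' (by rw [hort, LinearMap.zero_apply])
  exact hgm ▸ (f.symm ⟨m, hm⟩).2

theorem LatticeIsometric.exists_isIntegralIsometryOn {U : Type*} [AddCommGroup U]
    {B : U → U → ℚ} {L : Submodule ℤ U} {n m : ℕ}
    (h : LatticeIsometric B (prodForm (stdDot (n + 1)) (stdDot m)) L ((latA n).prod (latD m))) :
    ∃ τ : U → Fin (n + 1) ⊕ Fin m → ℤ,
      IsIntegralIsometryOn B L τ ∧ ∀ x ∈ L, ∑ k, τ x (.inl k) = 0 := by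
  obtain ⟨f, hf⟩ := h
  have hcoord (x : U) : ∃ t : Fin (n + 1) ⊕ Fin m → ℤ, ∀ hx : x ∈ L,
      (f ⟨x, hx⟩ : (Fin (n + 1) → ℚ) × (Fin m → ℚ)) =
        (fun k ↦ (t (.inl k) : ℚ), fun k ↦ (t (.inr k) : ℚ)) := by
    by_cases hx : x ∈ L
    · obtain ⟨u, hu⟩ := (f ⟨x, hx⟩).2.1.1.exists_eq
      obtain ⟨v, hv⟩ := (f ⟨x, hx⟩).2.2.1.exists_eq
      exact ⟨Sum.elim u v, fun _ ↦ Prod.ext hu hv⟩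
    · exact ⟨0, fun hx' ↦ (hx hx').elim⟩
  choose τ hτ using hcoord
  refine ⟨τ, fun x hx y hy ↦ ?_, fun x hx ↦ ?_⟩
  · rw [← hf ⟨x, hx⟩ ⟨y, hy⟩, hτ x hx, hτ y hy, dotProduct, Fintype.sum_sum_type]
    push_cast
    rfl
  · have hsum := (f ⟨x, hx⟩).2.1.2
    simp only [hτ x hx] at hsum
    exact_mod_cast hsum

theorem span_latD (n : ℕ) : Submodule.span ℚ (latD n : Set (Fin n → ℚ)) = ⊤ := by
  rw [eq_top_iff, ← (Pi.basisFun ℚ (Fin n)).span_eq, Submodule.span_le]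
  rintro _ ⟨i, rfl⟩
  have he : Pi.basisFun ℚ (Fin n) i = (1 / 2 : ℚ) • signedPair i 1 i := by
    rw [Pi.basisFun_apply, signedPair, Units.val_one, Int.cast_one]
    module
  rw [he]
  exact Submodule.smul_mem _ _ (Submodule.subset_span (signedPair_mem_latD i 1 i))

theorem span_latE8 : Submodule.span ℚ (latE8 : Set (Fin 8 → ℚ)) = ⊤ :=
  top_unique ((span_latD 8).ge.trans (Submodule.span_mono fun _ hx ↦ Submodule.mem_sup_left hx))

end Isometries

/-! ### Coordinates for a neighbor with roots `D₁₆ ⊕ E₈` -/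

section Arms

/-- Coordinates identifying `(V, B)` with `ℚ¹⁶ ⊕ ℚ⁸` in which the lattice `E` contains
`D₁₆ ⊕ E₈`. -/
structure IsD16E8Coordinates (B : V →ₗ[ℚ] V →ₗ[ℚ] ℚ) (E : Submodule ℤ V)
    (φ : V ≃ₗ[ℚ] (Fin 16 → ℚ) × (Fin 8 → ℚ)) : Prop where
  form_eq (x y : V) : prodForm dotProduct dotProduct (φ x) (φ y) = B x y
  symm_mem {r : (Fin 16 → ℚ) × (Fin 8 → ℚ)} : r ∈ (latD 16).prod latE8 → φ.symm r ∈ E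

variable {B : V →ₗ[ℚ] V →ₗ[ℚ] ℚ} {N E E₁ E₂ : Submodule ℤ V}
  {φ : V ≃ₗ[ℚ] (Fin 16 → ℚ) × (Fin 8 → ℚ)}

theorem exists_isD16E8Coordinates (hB : IsPosDefSymm B) (hV : Module.finrank ℚ V = 24)
    (h : LatticeIsometric (fun x y ↦ B x y) (prodForm (stdDot 16) (stdDot 8))
      (rootSublattice B E) ((latD 16).prod latE8)) :
    ∃ φ : V ≃ₗ[ℚ] (Fin 16 → ℚ) × (Fin 8 → ℚ), IsD16E8Coordinates B E φ := by
  have : FiniteDimensional ℚ V := .of_finrank_pos (by omega)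
  let C : (Fin 16 → ℚ) × (Fin 8 → ℚ) →ₗ[ℚ] (Fin 16 → ℚ) × (Fin 8 → ℚ) →ₗ[ℚ] ℚ :=
    (dotProductBilin ℚ ℚ).compl₁₂ (.fst ℚ _ _) (.fst ℚ _ _) +
      (dotProductBilin ℚ ℚ).compl₁₂ (.snd ℚ _ _) (.snd ℚ _ _)
  have hC (r : (Fin 16 → ℚ) × (Fin 8 → ℚ)) (hr : r ≠ 0) : 0 < C r r := by
    have h₁ := dotProduct_self_nonneg r.1
    have h₂ := dotProduct_self_nonneg r.2
    refine (add_nonneg h₁ h₂).lt_of_ne fun h0 ↦ hr ?_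
    obtain ⟨h₁', h₂'⟩ := (add_eq_zero_iff_of_nonneg h₁ h₂).1 h0.symm
    exact Prod.ext (dotProduct_self_eq_zero.1 h₁') (dotProduct_self_eq_zero.1 h₂')
  have hspan : Submodule.span ℚ ((latD 16).prod latE8 : Set ((Fin 16 → ℚ) × (Fin 8 → ℚ))) = ⊤ := by
    rw [Submodule.prod_coe, Submodule.span_prod_eq _ (zero_mem (latD 16)) (zero_mem latE8),
      span_latD, span_latE8, Submodule.prod_top]
  obtain ⟨φ, hφ, hmem⟩ := LatticeIsometric.exists_linearEquiv (C := C) h hB.2 hC hspan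
    (by simp [hV])
  exact ⟨φ, hφ, fun hr ↦ rootSublattice_le B E (hmem _ hr)⟩

namespace IsD16E8Coordinates

theorem exists_prodForm_eq (hφ : IsD16E8Coordinates B E φ) (hE : E ≤ dualLattice B E) {x : V}
    (hx : x ∈ E) {r : (Fin 16 → ℚ) × (Fin 8 → ℚ)} (hr : r ∈ (latD 16).prod latE8) :
    ∃ m : ℤ, prodForm dotProduct dotProduct r (φ x) = m := by
  obtain ⟨m, hm⟩ := hE (hφ.symm_mem hr) x hx
  exact ⟨m, by rw [← hm, ← hφ.form_eq, φ.apply_symm_apply]⟩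

theorem intOrHalf_fst (hφ : IsD16E8Coordinates B E φ) (hE : E ≤ dualLattice B E) {x : V}
    (hx : x ∈ E) : IntOrHalf (φ x).1 := by
  refine intOrHalf_of_forall_mem_latD fun u hu ↦ ?_
  simpa [prodForm] using hφ.exists_prodForm_eq hE hx (r := (u, 0)) ⟨hu, zero_mem latE8⟩

theorem snd_mem_latE8 (hφ : IsD16E8Coordinates B E φ) (hE : E ≤ dualLattice B E) {x : V}
    (hx : x ∈ E) : (φ x).2 ∈ latE8 := by
  refine mem_latE8_of_forall_dotProduct fun u hu ↦ ?_
  simpa [prodForm] using hφ.exists_prodForm_eq hE hx (r := (0, u)) ⟨zero_mem (latD 16), hu⟩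

theorem snd_eq_zero_or_fst_eq_zero (hφ : IsD16E8Coordinates B E φ) (hE : E ≤ dualLattice B E)
    {h : V} (hh : h ∈ E) (hhh : B h h = 2) :
    IsIntVec (φ h).1 ∧ (φ h).2 = 0 ∨ (φ h).1 = 0 := by
  have hnorm : (φ h).1 ⬝ᵥ (φ h).1 + (φ h).2 ⬝ᵥ (φ h).2 = 2 := (hφ.form_eq h h).trans hhh
  obtain ⟨m, hm⟩ := exists_dotProduct_self_eq_of_mem_latE8 (hφ.snd_mem_latE8 hE hh)
  have h₁ := dotProduct_self_nonneg (φ h).1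
  have h₂ := dotProduct_self_nonneg (φ h).2
  have hm_nonneg : 0 ≤ m := by exact_mod_cast (by linarith : (0 : ℚ) ≤ m)
  have hm_le : m ≤ 1 := by exact_mod_cast (by linarith : (m : ℚ) ≤ 1)
  obtain rfl | rfl : m = 0 ∨ m = 1 := by omega
  · refine .inl ⟨(hφ.intOrHalf_fst hE hh).resolve_right fun hhalf ↦ ?_,
      dotProduct_self_eq_zero.1 (by simpa using hm)⟩
    have hle := hhalf.div_four_le_norm
    push_cast at hle
    linarith
  · exact .inr (dotProduct_self_eq_zero.1 (by push_cast at hm; linarith))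

theorem symm_mem_rootSublattice (hφ : IsD16E8Coordinates B E₁ φ) (hB : ∀ x y, B x y = B y x)
    (hN : IsUnimodular B N) (hE₁ : IsEvenNeighbor B N E₁) (hE₂ : IsEvenNeighbor B N E₂) {a : V}
    (ha : a ∈ N) {k : ℤ} (haa : B a a = 2 * k + 1) {r : (Fin 16 → ℚ) × (Fin 8 → ℚ)}
    (hr : r ∈ evenRoots (prodForm dotProduct dotProduct) ((latD 16).prod latE8)
      (φ ((2 : ℚ) • a))) : φ.symm r ∈ rootSublattice B E₂ := by
  obtain ⟨hr, hrr, m, hm⟩ := hr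
  rw [← φ.apply_symm_apply r, hφ.form_eq] at hrr hm
  rw [map_smul, smul_eq_mul] at hm
  have hrN : φ.symm r ∈ N :=
    hE₁.mem_of_pairing_odd hB hN ha haa (hφ.symm_mem hr) (mul_left_cancel₀ two_ne_zero hm)
  exact Submodule.subset_span
    ⟨hE₂.mem_of_even_norm hB hN.le ⟨a, ha, k, haa⟩ hrN (n := 1) (by simpa using hrr), hrr⟩

variable {n m : ℕ}

theorem isHalfOdd_and_norm_fst (hφ : IsD16E8Coordinates B E₁ φ) (hB : ∀ x y, B x y = B y x)
    (hN : IsUnimodular B N) (hE₁ : IsEvenNeighbor B N E₁) (hE₂ : IsEvenNeighbor B N E₂)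
    (hnm : n + 1 + 2 * m < 36)
    (hr : LatticeIsometric (fun x y ↦ B x y) (prodForm (stdDot (n + 1)) (stdDot m))
      (rootSublattice B E₂) ((latA n).prod (latD m))) {a : V} (ha : a ∈ N) (haa : B a a = 3) :
    IsHalfOdd ((2 : ℚ) • (φ a).1) ∧
      ((φ a).1 ⬝ᵥ (φ a).1 = 1 ∨ (φ a).1 ⬝ᵥ (φ a).1 = 2) := by
  obtain ⟨τ, hτ, hτ0⟩ := hr.exists_isIntegralIsometryOn
  have hroot (r) (hr : r ∈ evenRoots (prodForm dotProduct dotProduct) ((latD 16).prod latE8)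
      (φ ((2 : ℚ) • a))) : φ.symm r ∈ rootSublattice B E₂ :=
    hφ.symm_mem_rootSublattice hB hN hE₁ hE₂ ha (k := 1) (by rw [haa]; norm_num) hr
  have htwo : B ((2 : ℚ) • a) ((2 : ℚ) • a) = 12 := by
    rw [map_smul, map_smul, LinearMap.smul_apply, haa]
    norm_num
  have h2a : (2 : ℚ) • a ∈ E₁ := by
    refine hE₁.mem_of_even_norm hB hN.le ⟨a, ha, 1, by rw [haa]; norm_num⟩ (n := 6) ?_
      (by rw [htwo]; norm_num)
    rw [two_smul]
    exact add_mem ha ha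
  have hτφ := hτ.comp (φ := φ.symm) hroot fun r _ s _ ↦ by
    rw [← hφ.form_eq, φ.apply_symm_apply, φ.apply_symm_apply]
  obtain ⟨hhalf, hnorm⟩ := isHalfOdd_and_norm_of_isIntegralIsometryOn
    (by simpa only [Fintype.card_fin] using hnm)
    (hφ.intOrHalf_fst hE₁.1.integral h2a) (hφ.snd_mem_latE8 hE₁.1.integral h2a)
    ((hφ.form_eq _ _).trans htwo) (fun r hr ↦ hτ0 _ (hroot r hr)) hτφ
  simp only [map_smul, Prod.smul_fst, dotProduct_smul, smul_dotProduct, smul_eq_mul] at hhalf hnorm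
  exact ⟨hhalf, hnorm.imp (fun h ↦ by linarith [h.1]) fun h ↦ by linarith [h.1]⟩

theorem isArmConfiguration (hφ : IsD16E8Coordinates B E₁ φ) (hB : ∀ x y, B x y = B y x)
    (hN : IsUnimodular B N) (hE₁ : IsEvenNeighbor B N E₁) (hE₂ : IsEvenNeighbor B N E₂)
    (hnm : n + 1 + 2 * m < 36)
    (hr : LatticeIsometric (fun x y ↦ B x y) (prodForm (stdDot (n + 1)) (stdDot m))
      (rootSublattice B E₂) ((latA n).prod (latD m))) {ι : Type*} {a : ι → V}
    (ha : ∀ i, a i ∈ N) (haa : ∀ i, B (a i) (a i) = 3) (hort : ∀ i j, i ≠ j → B (a i) (a j) = 0) :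
    IsArmConfiguration (fun i ↦ (φ (a i)).1) (fun i ↦ (φ (a i)).2) := by
  have harm (i) := hφ.isHalfOdd_and_norm_fst hB hN hE₁ hE₂ hnm hr (ha i) (haa i)
  have hsub (i j) : a i - a j ∈ E₁ := by
    obtain rfl | hij := eq_or_ne i j
    · rw [sub_self]
      exact zero_mem E₁
    · refine hE₁.mem_of_even_norm hB hN.le ⟨a i, ha i, 1, by rw [haa]; norm_num⟩
        (sub_mem (ha i) (ha j)) (n := 3) ?_
      rw [map_sub, map_sub, LinearMap.sub_apply, LinearMap.sub_apply, haa, haa, hort i j hij,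
        hort j i hij.symm]
      norm_num
  refine ⟨fun i ↦ (harm i).1, fun i ↦ (harm i).2, fun i ↦ (hφ.form_eq _ _).trans (haa i),
    fun i j ↦ ?_, fun i j ↦ ?_, fun {i j} hij ↦ (hφ.form_eq _ _).trans (hort i j hij)⟩
  · simpa using hφ.intOrHalf_fst hE₁.1.integral (hsub i j)
  · simpa using hφ.snd_mem_latE8 hE₁.1.integral (hsub i j)

end IsD16E8Coordinates

end Arms

/-- An odd Niemeier lattice of minimum norm 2 whose two even neighbors have root
sublattices isometric to `D₁₆⊕E₈` and `A₁₅⊕D₉` respectively does not contain `L⁺`. -/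
theorem stmt4 {V : Type*} [AddCommGroup V] [Module ℚ V]
    (B : V →ₗ[ℚ] V →ₗ[ℚ] ℚ) (hB : IsPosDefSymm B)
    (N : Submodule ℤ V) (hN : IsOddNiemeier B N)
    (hmin : HasMinNorm B N 2)
    (E₁ E₂ : Submodule ℤ V) (hne : E₁ ≠ E₂)
    (hE₁ : IsEvenNeighbor B N E₁) (hE₂ : IsEvenNeighbor B N E₂)
    (hr₁ : LatticeIsometric (fun x y => B x y) (prodForm (stdDot 16) (stdDot 8))
      (rootSublattice B E₁) ((latD 16).prod latE8))
    (hr₂ : LatticeIsometric (fun x y => B x y) (prodForm (stdDot 16) (stdDot 9))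
      (rootSublattice B E₂) ((latA 15).prod (latD 9))) :
    ¬ ContainsLPlus B N := by
  rintro ⟨h, hh, a, ha, hhh, hha, haa, hort⟩
  obtain ⟨hNI, hNU, hodd, hV⟩ := hN
  obtain ⟨φ, hφ⟩ := exists_isD16E8Coordinates hB hV hr₁
  have hA := hφ.isArmConfiguration hB.1 hNU hE₁ hE₂ (by norm_num) hr₂ ha haa hort
  have hhE : h ∈ E₁ :=
    hE₁.mem_of_even_norm hB.1 hNI.integral hodd hh (n := 1) (by rw [hhh]; norm_num)
  have hnorm : (φ h).1 ⬝ᵥ (φ h).1 + (φ h).2 ⬝ᵥ (φ h).2 = 2 := (hφ.form_eq h h).trans hhh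
  have hpair (i) : (φ h).1 ⬝ᵥ (φ (a i)).1 + (φ h).2 ⬝ᵥ (φ (a i)).2 = 1 :=
    (hφ.form_eq _ _).trans (hha i)
  obtain ⟨hint, h0⟩ | h0 := hφ.snd_eq_zero_or_fst_eq_zero hE₁.1.integral hhE hhh
  · simp only [h0, zero_dotProduct, add_zero] at hnorm hpair
    exact hA.false_of_root_latD le_rfl hint hnorm hpair
  · simp only [h0, zero_dotProduct, zero_add] at hnorm hpair
    exact hA.false_of_root_latE8 le_rfl hnorm hpair

end Niemeier
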